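/- arXiv:2001.02470 — 2 statements merged into one kernel-verified Lean document; each statement's English description precedes it below -/
import Mathlib

section
/- Let x_1,...,x_n be a sequence of elements of the ideal a which forms an unconditioned a-filter regular sequence on M. Assume that for every i with 0 ≤ i ≤ n-1 the canonical map λ^i_M : H^i(x_1,...,x_n; M) → H^i_{⟨x_1,...,x_n⟩}(M) from Koszul cohomology to local cohomology is surjective. Then x_1,...,x_n is an unconditioned ⟨x_1,...,x_n⟩-weak sequence on M; in particular, x_1,...,x_n is an u.s.d-sequence on M. -/
/-!
Formalization of a statement from "A theory of relative generalized Cohen-Macaulay modules"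
by Divaani-Aazar, Ghanbari Doust, Tousi and Zakeri.

Throughout, `R` is a commutative Noetherian ring and `M` a finitely generated `R`-module.
Conventions used below:
* `locH I i M` is the local cohomology module `H^i_I(M)` (Mathlib's `localCohomology`).
* Conditions `cd(I,M) = c`, `ara(I,M) = n`, `f_I(M) = f`, `grade(I,M) = r` are expressed by
  the predicates `IsCd`, `IsAra`, `IsFinDim`, `IsGrade`.
* Sequences are given as functions `Fin r → R`; `pSpan M x i = ⟨x_0,…,x_{i-1}⟩M`.
* Koszul (co)homology is defined via the explicit (co)chain complex on the `p`-element
  subsets of `{0,…,n-1}`, and the canonical map `λ^i` into local cohomology is the structure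
  map (at exponent 1) into the direct limit of Koszul cohomologies of powers of the sequence,
  which is the realization of `H^i_{⟨x⟩}(M)` used in the paper (2.1(iv)).
-/

open CategoryTheory

noncomputable section

variable {R : Type} [CommRing R]

/-! ### Sequences: prefix spans, weak sequences, filter regular sequences, d-sequences -/

/-- `pSpan M x i` is the submodule `⟨x_0, …, x_{i-1}⟩M` of `M`. -/
def pSpan (M : Type) [AddCommGroup M] [Module R M] {r : ℕ} (x : Fin r → R) (i : Fin r) :
    Submodule R M :=
  Ideal.span (x '' {j | j < i}) • (⊤ : Submodule R M)

/-- `x_1, …, x_r` is an `I`-weak sequence on `M`: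
`(⟨x_1,…,x_{i-1}⟩M :_M x_i) ⊆ (⟨x_1,…,x_{i-1}⟩M :_M I)` for all `i`. -/
def IsWeakSeq (I : Ideal R) (M : Type) [AddCommGroup M] [Module R M] {r : ℕ}
    (x : Fin r → R) : Prop :=
  ∀ i : Fin r, ∀ m : M, x i • m ∈ pSpan M x i → ∀ a ∈ I, a • m ∈ pSpan M x i

/-- `x_1, …, x_r` is an `I`-filter regular sequence on `M`:
`(⟨x_1,…,x_{i-1}⟩M :_M x_i) ⊆ ⋃ₜ (⟨x_1,…,x_{i-1}⟩M :_M I^t)` for all `i`. -/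
def IsFilterRegSeq (I : Ideal R) (M : Type) [AddCommGroup M] [Module R M] {r : ℕ}
    (x : Fin r → R) : Prop :=
  ∀ i : Fin r, ∀ m : M, x i • m ∈ pSpan M x i →
    ∃ t : ℕ, ∀ a ∈ I ^ t, a • m ∈ pSpan M x i

/-- An unconditioned `I`-filter regular sequence: filter regular in any order. -/
def IsUncondFilterRegSeq (I : Ideal R) (M : Type) [AddCommGroup M] [Module R M] {r : ℕ}
    (x : Fin r → R) : Prop :=
  ∀ σ : Equiv.Perm (Fin r), IsFilterRegSeq I M (x ∘ σ)

/-- An unconditioned `I`-weak sequence: all positive powers, in any order, form an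
`I`-weak sequence. -/
def IsUncondWeakSeq (I : Ideal R) (M : Type) [AddCommGroup M] [Module R M] {r : ℕ}
    (x : Fin r → R) : Prop :=
  ∀ σ : Equiv.Perm (Fin r), ∀ α : Fin r → ℕ, (∀ k, 0 < α k) →
    IsWeakSeq I M fun k => x (σ k) ^ α k

/-- `x_1, …, x_r` is a d-sequence on `M`:
`(⟨x_1,…,x_{i-1}⟩M :_M x_i x_j) = (⟨x_1,…,x_{i-1}⟩M :_M x_j)` for all `i ≤ j`. -/
def IsDSeq (M : Type) [AddCommGroup M] [Module R M] {r : ℕ} (x : Fin r → R) : Prop :=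
  ∀ i j : Fin r, i ≤ j → ∀ m : M,
    ((x i * x j) • m ∈ pSpan M x i ↔ x j • m ∈ pSpan M x i)

/-- An u.s.d-sequence on `M`: all positive powers, in any order, form a d-sequence. -/
def IsUSDSeq (M : Type) [AddCommGroup M] [Module R M] {r : ℕ} (x : Fin r → R) : Prop :=
  ∀ σ : Equiv.Perm (Fin r), ∀ α : Fin r → ℕ, (∀ k, 0 < α k) →
    IsDSeq M fun k => x (σ k) ^ α k

/-! ### Koszul cochain complexes, Koszul cohomology, and the canonical maps
`λ^i_M : H^i(x; M) → H^i_{⟨x⟩}(M)` -/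

/-- The degree `p` term of the Koszul cochain complex of `M` on `n` elements:
functions on the `p`-element subsets of `{1, …, n}` with values in `M`
(i.e. `Hom(Λ^p R^n, M)`). -/
abbrev KM (M : Type) (n p : ℕ) : Type := {s : Finset (Fin n) // s.card = p} → M

section Koszul

variable {M : Type} [AddCommGroup M] [Module R M]

/-- The Koszul cochain differential `K^p(x; M) → K^{p+1}(x; M)`. -/
def kd {n : ℕ} (x : Fin n → R) (p : ℕ) : KM M n p →ₗ[R] KM M n (p + 1) where
  toFun f t := ∑ j ∈ t.1.attach,
    ((-1 : R) ^ (t.1.filter (fun a => a < j.1)).card * x j.1) •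
      f ⟨t.1.erase j.1, by rw [Finset.card_erase_of_mem j.2, t.2]; omega⟩
  map_add' f g := by
    funext t
    simp [smul_add, Finset.sum_add_distrib]
  map_smul' r f := by
    funext t
    simp [Finset.smul_sum, smul_comm r]

/-- The transition map of Koszul cochain complexes raising the exponent of the defining
sequence by `e`: in degree `p` it multiplies the component at a subset `s`
by `(∏_{j ∈ s} x_j)^e`. -/
def kt {n : ℕ} (x : Fin n → R) (e p : ℕ) : KM M n p →ₗ[R] KM M n p where
  toFun f s := (∏ j ∈ s.1, x j) ^ e • f s
  map_add' f g := by funext s; simp [smul_add]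
  map_smul' r f := by funext s; simp [smul_comm r]

/-- The transition maps are maps of cochain complexes
`K^•(x^u; M) → K^•(x^{u+e}; M)`. -/
theorem kt_kd {n : ℕ} (x : Fin n → R) (u e p : ℕ) :
    (kt (M := M) x e (p + 1)).comp (kd (fun j => x j ^ u) p)
      = (kd (fun j => x j ^ (u + e)) p).comp (kt x e p) := by
  apply LinearMap.ext; intro f
  funext t
  simp only [LinearMap.comp_apply, kd, kt, LinearMap.coe_mk, AddHom.coe_mk]
  rw [Finset.smul_sum]
  refine Finset.sum_congr rfl fun j _ => ?_
  rw [smul_smul, smul_smul]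
  congr 1
  rw [← Finset.mul_prod_erase t.1 x j.2]
  ring

end Koszul

/-- The `R`-module of Koszul `p`-cocycles of `M` with respect to `y`. -/
def kZ {n : ℕ} (y : Fin n → R) (M : Type) [AddCommGroup M] [Module R M] (p : ℕ) :
    Submodule R (KM M n p) :=
  LinearMap.ker (kd y p)

/-- The `R`-module of Koszul `p`-coboundaries of `M` with respect to `y`. -/
def kB {n : ℕ} (y : Fin n → R) (M : Type) [AddCommGroup M] [Module R M] :
    (p : ℕ) → Submodule R (KM M n p)
  | 0 => ⊥
  | (q + 1) => LinearMap.range (kd y q)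

/-- The `p`-th Koszul cohomology module `H^p(y; M)`: cocycles modulo coboundaries. -/
abbrev Hk {n : ℕ} (y : Fin n → R) (M : Type) [AddCommGroup M] [Module R M] (p : ℕ) :=
  kZ y M p ⧸ ((kB y M p ⊓ kZ y M p).comap (kZ y M p).subtype)

section KoszulMaps

variable {M : Type} [AddCommGroup M] [Module R M]

theorem kt_mem_kZ {n : ℕ} (x : Fin n → R) {u v : ℕ} (h : u ≤ v) (p : ℕ) :
    ∀ f ∈ kZ (fun j => x j ^ (u + 1)) M p,
      kt x (v - u) p f ∈ kZ (fun j => x j ^ (v + 1)) M p := by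
  intro f hf
  have he : u + 1 + (v - u) = v + 1 := by omega
  have hc := congrArg (fun φ => φ f) (kt_kd (M := M) x (u + 1) (v - u) p)
  simp only [LinearMap.comp_apply] at hc
  rw [he] at hc
  simp only [kZ, LinearMap.mem_ker] at hf ⊢
  rw [← hc, hf, map_zero]

theorem kt_mem_kB {n : ℕ} (x : Fin n → R) {u v : ℕ} (h : u ≤ v) (p : ℕ) :
    ∀ f ∈ kB (fun j => x j ^ (u + 1)) M p,
      kt x (v - u) p f ∈ kB (fun j => x j ^ (v + 1)) M p := by
  intro f hf
  cases p with
  | zero =>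
      simp only [kB, Submodule.mem_bot] at hf ⊢
      rw [hf, map_zero]
  | succ q =>
      simp only [kB, LinearMap.mem_range] at hf ⊢
      obtain ⟨g, hg⟩ := hf
      refine ⟨kt x (v - u) q g, ?_⟩
      have he : u + 1 + (v - u) = v + 1 := by omega
      have hc := congrArg (fun φ => φ g) (kt_kd (M := M) x (u + 1) (v - u) q)
      simp only [LinearMap.comp_apply] at hc
      rw [he] at hc
      rw [← hc, hg]

end KoszulMaps

/-- The map `H^p(x^{u+1}; M) → H^p(x^{v+1}; M)`, `u ≤ v`, induced by the transition map of
Koszul cochain complexes. -/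
def ktH {n : ℕ} (x : Fin n → R) (M : Type) [AddCommGroup M] [Module R M] (p : ℕ)
    (u v : ℕ) (h : u ≤ v) :
    Hk (fun j => x j ^ (u + 1)) M p →ₗ[R] Hk (fun j => x j ^ (v + 1)) M p :=
  Submodule.mapQ _ _ ((kt x (v - u) p).restrict (kt_mem_kZ x h p)) (by
    rintro ⟨f, hfZ⟩ hfN
    simp only [Submodule.mem_comap, Submodule.mem_inf, Submodule.coe_subtype] at hfN ⊢
    exact ⟨kt_mem_kB x h p f hfN.1, kt_mem_kZ x h p f hfN.2⟩)

/-- `H^p_{⟨x⟩}(M)`, realized as the direct limit of the Koszul cohomology modules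
`H^p(x^{u+1}; M)` along the transition maps (cf. 2.1(iv) in the paper). -/
abbrev KLoc {n : ℕ} (x : Fin n → R) (M : Type) [AddCommGroup M] [Module R M] (p : ℕ) :=
  Module.DirectLimit (fun u : ℕ => Hk (fun j => x j ^ (u + 1)) M p)
    (fun u v h => ktH x M p u v h)

/-- Transport of Koszul cohomology along an equality of defining sequences. -/
def castHk {n : ℕ} (M : Type) [AddCommGroup M] [Module R M] (p : ℕ) {y z : Fin n → R}
    (h : y = z) : Hk y M p →ₗ[R] Hk z M p :=
  Eq.rec (motive := fun w _ => Hk y M p →ₗ[R] Hk w M p) LinearMap.id h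

/-- The canonical map `λ^p_M : H^p(x; M) → H^p_{⟨x⟩}(M)`, i.e. the structure map of the
direct limit at exponent `1`. -/
def klambda {n : ℕ} (x : Fin n → R) (M : Type) [AddCommGroup M] [Module R M] (p : ℕ) :
    Hk x M p →ₗ[R] KLoc x M p :=
  (Module.DirectLimit.of R ℕ (fun u : ℕ => Hk (fun j => x j ^ (u + 1)) M p)
      (fun u v h => ktH x M p u v h) 0).comp
    (castHk M p (funext fun j => by rw [zero_add, pow_one] :
      x = fun j => x j ^ (0 + 1)))

/-- Surjectivity of the canonical map `λ^p_M : H^p(x; M) → H^p_{⟨x⟩}(M)`. -/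
def LambdaSurj {n : ℕ} (x : Fin n → R) (M : Type) [AddCommGroup M] [Module R M] (p : ℕ) :
    Prop :=
  Function.Surjective (klambda x M p)

/-!
Surjectivity of `λ^p` says that along the transition maps every Koszul `p`-cocycle for a power of
`x` becomes cohomologous to one coming from `x` itself; say that `M` is *stable* in degree `p`.

In degree `0` an element killed by a power of each `x_k` is a cocycle for a power of `x`, so
stability forces `⟨x⟩` to kill it. Filter regularity thus becomes weak regularity modulo a
submodule `⟨x_j^{e_j} : j ∈ S⟩M`, once two things are known.

* Powers of the `x_j` are again filter regular in any order: this is regularity in every order on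
  the localizations `M_c`, `c ∈ I`, where it can be proved one factor at a time.
* Stability of `M` in degrees `p` and `p + 1` gives stability of `M / rM` in degree `p` when
  `r ∈ ⟨x⟩` and `⟨x⟩` kills `0 :_M r`. A cocycle of `M / rM` lifts to a cochain `f` with
  `df = r h`. After one transition `h` is a cocycle, because `dh` has values in `0 :_M r`; by
  stability it then comes from a cocycle `g` for `x`, up to a coboundary. Multiplication by `r` is
  null-homotopic on the Koszul complex of `x`, so `r g` is a coboundary, and correcting `f`
  accordingly yields a cocycle of `M`.

The annihilation of `0 :_M r`, for `r = x_j^{e_j}`, is the weak regularity already obtained for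
smaller `S`, so both properties are established together by adding one index to `S` at a time.

For d-sequences, `x_j` may be exchanged with `x_i` and raised to a higher power without changing
`⟨x_1, …, x_{i-1}⟩M`, so the weak property at `i` also gives
`x_i x_j m ∈ N ⟹ x_j² m ∈ N ⟹ x_j m ∈ N` for `N = ⟨x_1, …, x_{i-1}⟩M`.
-/

section SpanSMulTop

variable {A N ι : Type*} [CommRing A] [AddCommGroup N] [Module A N]

/-- `⟨y_j : j ∈ S⟩N`. The submodule `pSpan M x i` is the case `S = {j | j < i}`; arbitrary index
sets make permutations of the sequence a matter of reindexing. -/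
def spanSMulTop (N : Type*) [AddCommGroup N] [Module A N] (y : ι → A) (S : Set ι) :
    Submodule A N :=
  Ideal.span (y '' S) • ⊤

theorem spanSMulTop_empty (y : ι → A) : spanSMulTop N y ∅ = ⊥ := by
  simp [spanSMulTop]

theorem spanSMulTop_mono (y : ι → A) {S T : Set ι} (h : S ⊆ T) :
    spanSMulTop N y S ≤ spanSMulTop N y T :=
  Submodule.smul_mono_left (Ideal.span_mono (Set.image_mono h))

theorem spanSMulTop_congr {y z : ι → A} {S : Set ι} (h : Set.EqOn y z S) :
    spanSMulTop N y S = spanSMulTop N z S := by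
  rw [spanSMulTop, spanSMulTop, Set.image_congr h]

theorem spanSMulTop_comp {κ : Type*} (y : ι → A) (σ : κ → ι) (S : Set κ) :
    spanSMulTop N (y ∘ σ) S = spanSMulTop N y (σ '' S) := by
  rw [spanSMulTop, spanSMulTop, Set.image_comp]

theorem mem_spanSMulTop_insert {y : ι → A} {S : Set ι} {j : ι} {m : N} :
    m ∈ spanSMulTop N y (insert j S) ↔ ∃ m', m - y j • m' ∈ spanSMulTop N y S := by
  simp only [spanSMulTop, Set.image_insert_eq, Ideal.span_insert, Submodule.sup_smul,
    Submodule.ideal_span_singleton_smul, Submodule.mem_sup,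
    Submodule.mem_smul_pointwise_iff_exists]
  constructor
  · rintro ⟨_, ⟨m', -, rfl⟩, b, hb, rfl⟩
    exact ⟨m', by simpa using hb⟩
  · rintro ⟨m', hm'⟩
    exact ⟨_, ⟨m', trivial, rfl⟩, _, hm', add_sub_cancel _ _⟩

theorem exact_smul_factor_spanSMulTop_insert (y : ι → A) (S : Set ι) (j : ι) :
    Function.Exact (fun m : N ⧸ spanSMulTop N y S => y j • m)
      (Submodule.factor (spanSMulTop_mono y (Set.subset_insert j S))) := by
  intro m
  obtain ⟨m, rfl⟩ := Submodule.Quotient.mk_surjective _ m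
  change Submodule.Quotient.mk m = 0 ↔ _
  rw [Submodule.Quotient.mk_eq_zero, mem_spanSMulTop_insert,
    Set.mem_range, (Submodule.Quotient.mk_surjective _).exists]
  simp only [← Submodule.Quotient.mk_smul, eq_comm (b := Submodule.Quotient.mk m),
    Submodule.Quotient.eq]

theorem mk'_mem_localized₀_iff (p : Submonoid A) {L : Type*} [AddCommGroup L] [Module A L]
    (f : N →ₗ[A] L) [IsLocalizedModule p f] {P : Submodule A N} {m : N} {s : p} :
    IsLocalizedModule.mk' f m s ∈ P.localized₀ p f ↔ ∃ t ∈ p, t • m ∈ P := by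
  constructor
  · rintro ⟨m', hm', s', h⟩
    obtain ⟨t, ht⟩ := (IsLocalizedModule.mk'_eq_mk'_iff f _ _ _ _).1 h
    refine ⟨t * s', (t * s').2, ?_⟩
    change t • s' • m = t • s • m' at ht
    rw [mul_smul]
    exact ht ▸ P.smul_mem _ (P.smul_mem _ hm')
  · rintro ⟨t, htp, ht⟩
    exact ⟨t • m, ht, ⟨t, htp⟩ * s, IsLocalizedModule.mk'_cancel_left f m ⟨t, htp⟩ s⟩

theorem mk'_mem_spanSMulTop_iff (p : Submonoid A) {L : Type*} [AddCommGroup L] [Module A L]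
    (f : N →ₗ[A] L) [IsLocalizedModule p f] {y : ι → A} {S : Set ι} {m : N} {s : p} :
    IsLocalizedModule.mk' f m s ∈ spanSMulTop L y S ↔ ∃ t ∈ p, t • m ∈ spanSMulTop N y S := by
  rw [← mk'_mem_localized₀_iff p f (s := s), spanSMulTop, spanSMulTop,
    Submodule.localized₀_smul, Submodule.localized₀_top]

end SpanSMulTop

section PermutableRegular

variable {A N ι : Type*} [CommRing A] [AddCommGroup N] [Module A N]

/-- The family `y` is a weakly regular sequence on `N` in every order: each `y i` is a
nonzerodivisor modulo any of the other members. Nothing is asked of `N / ⟨y⟩N`, so that the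
notion survives localization. -/
def IsPermutableRegular (N : Type*) [AddCommGroup N] [Module A N] (y : ι → A) : Prop :=
  ∀ (S : Set ι) (i : ι), i ∉ S → ∀ m : N, y i • m ∈ spanSMulTop N y S → m ∈ spanSMulTop N y S

theorem spanSMulTop_update_of_notMem [DecidableEq ι] (y : ι → A) (a : A) {S : Set ι} {j : ι}
    (hj : j ∉ S) : spanSMulTop N (Function.update y j a) S = spanSMulTop N y S :=
  spanSMulTop_congr fun _ hk => Function.update_of_ne (ne_of_mem_of_not_mem hk hj) _ _

theorem mem_spanSMulTop_update_insert [DecidableEq ι] {y : ι → A} {a : A} {S : Set ι} {j : ι}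
    (hj : j ∉ S) {m : N} :
    m ∈ spanSMulTop N (Function.update y j a) (insert j S) ↔
      ∃ m', m - a • m' ∈ spanSMulTop N y S := by
  rw [mem_spanSMulTop_insert, Function.update_self, spanSMulTop_update_of_notMem y a hj]

theorem isPermutableRegular_update_iff [DecidableEq ι] {y : ι → A} {j : ι} {a : A} :
    IsPermutableRegular N (Function.update y j a) ↔
      ∀ S : Set ι, j ∉ S →
        (∀ m : N, a • m ∈ spanSMulTop N y S → m ∈ spanSMulTop N y S) ∧
        ∀ i ≠ j, i ∉ S →
          (∀ m : N, y i • m ∈ spanSMulTop N y S → m ∈ spanSMulTop N y S) ∧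
          ∀ m m' : N, y i • m - a • m' ∈ spanSMulTop N y S →
            ∃ m'', m - a • m'' ∈ spanSMulTop N y S := by
  constructor
  · intro h S hj
    refine ⟨fun m hm => ?_, fun i hij hi => ⟨fun m hm => ?_, fun m m' hm => ?_⟩⟩
    · have := h S j hj m
      rw [Function.update_self, spanSMulTop_update_of_notMem y a hj] at this
      exact this hm
    · have := h S i hi m
      rw [Function.update_of_ne hij, spanSMulTop_update_of_notMem y a hj] at this
      exact this hm
    · have := h (insert j S) i (by simp [hij, hi]) m
      rw [Function.update_of_ne hij, mem_spanSMulTop_update_insert hj,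
        mem_spanSMulTop_update_insert hj] at this
      exact this ⟨m', hm⟩
  · intro h S i hi m hm
    by_cases hj : j ∈ S
    · obtain ⟨T, hjT, rfl⟩ : ∃ T, j ∉ T ∧ insert j T = S :=
        ⟨S \ {j}, by simp, by simp [Set.insert_eq_of_mem hj]⟩
      have hij : i ≠ j := fun hij => hi (hij ▸ hj)
      rw [Function.update_of_ne hij, mem_spanSMulTop_update_insert hjT] at hm
      rw [mem_spanSMulTop_update_insert hjT]
      obtain ⟨m', hm'⟩ := hm
      exact ((h T hjT).2 i hij fun hiT => hi (Set.mem_insert_of_mem j hiT)).2 m m' hm'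
    · rw [spanSMulTop_update_of_notMem y a hj] at hm ⊢
      by_cases hij : i = j
      · subst hij
        exact (h S hj).1 m (by simpa using hm)
      · exact ((h S hj).2 i hij hi).1 m (by simpa [hij] using hm)

theorem IsPermutableRegular.update_one [DecidableEq ι] {y : ι → A}
    (h : IsPermutableRegular N y) (j : ι) : IsPermutableRegular N (Function.update y j 1) :=
  isPermutableRegular_update_iff.2 fun S _ =>
    ⟨fun m hm => by simpa using hm, fun i _ hi => ⟨h S i hi, fun m _ _ => ⟨m, by simp⟩⟩⟩

theorem IsPermutableRegular.update_mul [DecidableEq ι] {y : ι → A} {j : ι} {a b : A}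
    (ha : IsPermutableRegular N (Function.update y j a))
    (hb : IsPermutableRegular N (Function.update y j b)) :
    IsPermutableRegular N (Function.update y j (a * b)) := by
  rw [isPermutableRegular_update_iff] at ha hb ⊢
  intro S hj
  obtain ⟨ha_reg, ha⟩ := ha S hj
  obtain ⟨hb_reg, hb⟩ := hb S hj
  refine ⟨fun m hm => hb_reg m (ha_reg _ (by rwa [smul_smul])),
    fun i hij hi => ⟨(ha i hij hi).1, fun m m₁ hm => ?_⟩⟩
  -- Modulo `⟨y_S⟩N`, `y_i m = a b m₁` gives in turn `m = a m₂`, `y_i m₂ = b m₁`, `m₂ = b m₃`.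
  obtain ⟨m₂, hm₂⟩ := (ha i hij hi).2 m (b • m₁) (by rwa [smul_smul])
  have hm₂₁ : y i • m₂ - b • m₁ ∈ spanSMulTop N y S := by
    refine ha_reg _ ?_
    convert sub_mem hm (Submodule.smul_mem _ (y i) hm₂) using 1
    module
  obtain ⟨m₃, hm₃⟩ := (hb i hij hi).2 m₂ m₁ hm₂₁
  refine ⟨m₃, ?_⟩
  convert add_mem hm₂ (Submodule.smul_mem _ a hm₃) using 1
  module

theorem IsPermutableRegular.update_pow [DecidableEq ι] {y : ι → A}
    (h : IsPermutableRegular N y) (j : ι) (e : ℕ) :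
    IsPermutableRegular N (Function.update y j (y j ^ e)) := by
  induction e with
  | zero => simpa using h.update_one j
  | succ e ih => simpa [pow_succ] using ih.update_mul (b := y j) (by simpa using h)

theorem IsPermutableRegular.pow [Finite ι] {y : ι → A} (h : IsPermutableRegular N y)
    (e : ι → ℕ) : IsPermutableRegular N fun k => y k ^ e k := by
  classical
  have := Fintype.ofFinite ι
  suffices ∀ F : Finset ι, IsPermutableRegular N (F.piecewise (fun k => y k ^ e k) y) by
    simpa using this Finset.univ
  intro F
  induction F using Finset.induction_on with
  | empty => simpa using h
  | insert j F hj ih => simpa [Finset.piecewise_insert, hj] using ih.update_pow j (e j)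

end PermutableRegular

section FilterRegular

variable {M : Type} [AddCommGroup M] [Module R M] {n : ℕ}

theorem exists_perm_image_Iio_eq {S : Set (Fin n)} {i : Fin n} (hi : i ∉ S) :
    ∃ (σ : Equiv.Perm (Fin n)) (k : Fin n), σ k = i ∧ σ '' {j | j < k} = S := by
  classical
  let rank : Fin n → ℕ := fun j => if j ∈ S then 0 else if j = i then 1 else 2
  obtain ⟨σ, hσ⟩ : ∃ σ : Equiv.Perm (Fin n), Monotone (rank ∘ σ) :=
    ⟨Tuple.sort rank, Tuple.monotone_sort rank⟩
  refine ⟨σ, σ.symm i, σ.apply_symm_apply i, ?_⟩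
  rw [Equiv.image_eq_preimage_symm]
  ext s
  constructor
  · intro hs
    have hle : rank s ≤ rank i := by simpa using hσ (le_of_lt hs)
    have hne : s ≠ i := by rintro rfl; exact lt_irrefl (σ.symm s) hs
    by_contra hsS
    simp [rank, hi, hsS, hne] at hle
  · intro hs
    by_contra hlt
    have hle : rank i ≤ rank s := by simpa using hσ (not_lt.1 hlt)
    simp [rank, hi, hs] at hle

theorem IsUncondFilterRegSeq.exists_pow_smul_mem {I : Ideal R} {x : Fin n → R}
    (h : IsUncondFilterRegSeq I M x) {c : R} (hc : c ∈ I) {S : Set (Fin n)} {i : Fin n}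
    (hi : i ∉ S) {m : M} (hm : x i • m ∈ spanSMulTop M x S) :
    ∃ t : ℕ, c ^ t • m ∈ spanSMulTop M x S := by
  obtain ⟨σ, k, rfl, rfl⟩ := exists_perm_image_Iio_eq hi
  rw [← spanSMulTop_comp] at hm ⊢
  obtain ⟨t, ht⟩ := h σ k m hm
  exact ⟨t, ht _ (Ideal.pow_mem_pow hc t)⟩

theorem IsUncondFilterRegSeq.isPermutableRegular_localizedModule {I : Ideal R} {x : Fin n → R}
    (h : IsUncondFilterRegSeq I M x) {c : R} (hc : c ∈ I) :
    IsPermutableRegular (LocalizedModule (Submonoid.powers c) M) x := by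
  intro S i hi m hm
  obtain ⟨⟨m, s⟩, rfl⟩ := IsLocalizedModule.mk'_surjective (Submonoid.powers c)
    (LocalizedModule.mkLinearMap (Submonoid.powers c) M) m
  rw [Function.uncurry_apply_pair, ← IsLocalizedModule.mk'_smul, mk'_mem_spanSMulTop_iff] at hm
  rw [Function.uncurry_apply_pair, mk'_mem_spanSMulTop_iff]
  obtain ⟨_, ⟨t, rfl⟩, ht⟩ := hm
  rw [smul_comm] at ht
  obtain ⟨t', ht'⟩ := h.exists_pow_smul_mem hc hi ht
  exact ⟨c ^ t' * c ^ t, mul_mem ⟨t', rfl⟩ ⟨t, rfl⟩, by rwa [mul_smul]⟩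

theorem IsUncondFilterRegSeq.exists_pow_smul_mem_of_pow_smul_mem {I : Ideal R} {x : Fin n → R}
    (h : IsUncondFilterRegSeq I M x) {c : R} (hc : c ∈ I) (e : Fin n → ℕ) {S : Set (Fin n)}
    {i : Fin n} (hi : i ∉ S) {m : M} (hm : x i ^ e i • m ∈ spanSMulTop M (fun k => x k ^ e k) S) :
    ∃ t : ℕ, c ^ t • m ∈ spanSMulTop M (fun k => x k ^ e k) S := by
  have hreg := (h.isPermutableRegular_localizedModule hc).pow e S i hi
    (IsLocalizedModule.mk' (LocalizedModule.mkLinearMap (.powers c) M) m (1 : Submonoid.powers c))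
  rw [← IsLocalizedModule.mk'_smul, mk'_mem_spanSMulTop_iff, mk'_mem_spanSMulTop_iff] at hreg
  obtain ⟨_, ⟨t, rfl⟩, ht⟩ := hreg ⟨1, one_mem _, by rwa [one_smul]⟩
  exact ⟨t, ht⟩

end FilterRegular

section KoszulTotal

variable {A N ι : Type*} [CommRing A] [AddCommGroup N] [Module A N] [LinearOrder ι]

/-- The sign `±1` with `e_j ∧ e_s = ± e_{s ∪ {j}}` in the exterior algebra, for `j ∉ s`. -/
def koszulSign (A : Type*) [CommRing A] (j : ι) (s : Finset ι) : A :=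
  (-1) ^ (s.filter (· < j)).card

theorem koszulSign_mul_self (j : ι) (s : Finset ι) :
    koszulSign A j s * koszulSign A j s = 1 := by
  rw [koszulSign, ← mul_pow, neg_one_mul, neg_neg, one_pow]

theorem koszulSign_insert {j k : ι} {s : Finset ι} (hk : k ∉ s) :
    koszulSign A j (insert k s) = (if k < j then -1 else 1) * koszulSign A j s := by
  rw [koszulSign, koszulSign, Finset.filter_insert]
  split_ifs
  · rw [Finset.card_insert_of_notMem (by simp [hk]), pow_succ']
  · rw [one_mul]

theorem koszulSign_insert_self {j : ι} {s : Finset ι} (hj : j ∉ s) :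
    koszulSign A j (insert j s) = koszulSign A j s := by
  rw [koszulSign_insert hj, if_neg (lt_irrefl j), one_mul]

theorem koszulSign_insert_mul_koszulSign_insert {j k : ι} {s : Finset ι} (hjk : j ≠ k)
    (hj : j ∉ s) (hk : k ∉ s) :
    koszulSign A j (insert k s) * koszulSign A k (insert j s) =
      -(koszulSign A k s * koszulSign A j s) := by
  rw [koszulSign_insert hk, koszulSign_insert hj]
  rcases hjk.lt_or_gt with h | h <;> simp [h, h.not_gt, mul_comm]

/-- The Koszul differential on all cochains at once: exterior multiplication by `∑ j, y j e_j` on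
families indexed by the finite subsets of `ι`, with no grading to carry along. -/
def koszulD (N : Type*) [AddCommGroup N] [Module A N] (y : ι → A) :
    (Finset ι → N) →ₗ[A] (Finset ι → N) where
  toFun F t := ∑ j ∈ t, (koszulSign A j t * y j) • F (t.erase j)
  map_add' F G := by
    ext t
    simp only [Pi.add_apply, smul_add, Finset.sum_add_distrib]
  map_smul' r F := by
    ext t
    simp only [Pi.smul_apply, Finset.smul_sum, smul_comm r, RingHom.id_apply]

theorem koszulD_apply (y : ι → A) (F : Finset ι → N) (t : Finset ι) :
    koszulD N y F t = ∑ j ∈ t, (koszulSign A j t * y j) • F (t.erase j) :=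
  rfl

/-- Interior multiplication of Koszul cochains by the `j`-th dual basis vector, a contracting
homotopy for multiplication by `y j`. -/
def koszulContract (A N : Type*) [CommRing A] [AddCommGroup N] [Module A N] (j : ι) :
    (Finset ι → N) →ₗ[A] (Finset ι → N) where
  toFun F t := if j ∈ t then 0 else koszulSign A j t • F (insert j t)
  map_add' F G := by
    ext t
    simp only [Pi.add_apply]
    split_ifs <;> simp
  map_smul' r F := by
    ext t
    simp only [Pi.smul_apply, smul_comm _ r, RingHom.id_apply]
    split_ifs <;> simp

theorem koszulContract_of_mem {j : ι} {t : Finset ι} (hj : j ∈ t) (F : Finset ι → N) :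
    koszulContract A N j F t = 0 :=
  if_pos hj

theorem koszulContract_of_notMem {j : ι} {t : Finset ι} (hj : j ∉ t) (F : Finset ι → N) :
    koszulContract A N j F t = koszulSign A j t • F (insert j t) :=
  if_neg hj

theorem koszulD_koszulContract_of_mem (y : ι → A) {j : ι} {t : Finset ι} (hj : j ∈ t)
    (F : Finset ι → N) : koszulD N y (koszulContract A N j F) t = y j • F t := by
  obtain ⟨s, hjs, rfl⟩ : ∃ s, j ∉ s ∧ insert j s = t :=
    ⟨t.erase j, Finset.notMem_erase j t, Finset.insert_erase hj⟩
  rw [koszulD_apply, Finset.sum_eq_single_of_mem j hj, Finset.erase_insert hjs,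
    koszulContract_of_notMem hjs, smul_smul, mul_right_comm, koszulSign_insert_self hjs,
    koszulSign_mul_self, one_mul]
  intro k _ hkj
  rw [koszulContract_of_mem (Finset.mem_erase.2 ⟨hkj.symm, hj⟩), smul_zero]

theorem koszulD_koszulContract_of_notMem (y : ι → A) {j : ι} {t : Finset ι} (hj : j ∉ t)
    (F : Finset ι → N) :
    koszulD N y (koszulContract A N j F) t + koszulSign A j t • koszulD N y F (insert j t) =
      y j • F t := by
  rw [koszulD_apply, koszulD_apply, Finset.sum_insert hj, Finset.erase_insert hj,
    koszulSign_insert_self hj, smul_add, smul_smul, ← mul_assoc, koszulSign_mul_self, one_mul,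
    add_left_comm, Finset.smul_sum, ← Finset.sum_add_distrib, Finset.sum_eq_zero, add_zero]
  intro k hk
  obtain ⟨s, hks, rfl⟩ : ∃ s, k ∉ s ∧ insert k s = t :=
    ⟨t.erase k, Finset.notMem_erase k t, Finset.insert_erase hk⟩
  obtain ⟨hjk, hjs⟩ : j ≠ k ∧ j ∉ s := by simpa [not_or] using hj
  have hkj : k ∉ insert j s := by simp [hjk.symm, hks]
  rw [Finset.erase_insert_of_ne hjk, Finset.erase_insert hks, koszulContract_of_notMem hjs,
    Finset.insert_comm j k, koszulSign_insert_self hkj, koszulSign_insert_self hks, smul_smul,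
    smul_smul, ← add_smul]
  convert zero_smul A (F (insert j s)) using 2
  linear_combination y k * koszulSign_insert_mul_koszulSign_insert (A := A) hjk hjs hks

theorem koszulD_koszulContract_add (y : ι → A) (j : ι) (F : Finset ι → N) :
    koszulD N y (koszulContract A N j F) + koszulContract A N j (koszulD N y F) = y j • F := by
  ext t
  by_cases hj : j ∈ t
  · rw [Pi.add_apply, koszulContract_of_mem hj, add_zero, koszulD_koszulContract_of_mem y hj,
      Pi.smul_apply]
  · rw [Pi.add_apply, koszulContract_of_notMem hj, koszulD_koszulContract_of_notMem y hj,
      Pi.smul_apply]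

theorem koszulContract_koszulD_koszulD (y : ι → A) (j : ι) (F : Finset ι → N) :
    koszulContract A N j (koszulD N y (koszulD N y F)) =
      koszulD N y (koszulD N y (koszulContract A N j F)) := by
  rw [eq_sub_of_add_eq' (koszulD_koszulContract_add y j (koszulD N y F)),
    eq_sub_of_add_eq' (koszulD_koszulContract_add y j F), map_sub, map_smul, sub_sub_cancel]

theorem koszulD_koszulD (y : ι → A) (F : Finset ι → N) : koszulD N y (koszulD N y F) = 0 := by
  ext t
  induction t using Finset.induction_on generalizing F with
  | empty => simp [koszulD_apply]
  | insert j s hj ih =>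
    have h : koszulSign A j s • koszulD N y (koszulD N y F) (insert j s) = 0 := by
      rw [← koszulContract_of_notMem hj, koszulContract_koszulD_koszulD, ih, Pi.zero_apply]
    simpa [smul_smul, koszulSign_mul_self] using congrArg (koszulSign A j s • ·) h

end KoszulTotal

section KoszulGraded

variable {M : Type} [AddCommGroup M] {n p : ℕ}

/-- Extension by zero of a Koszul `p`-cochain to all finite subsets. -/
def koszulExt (R : Type) [CommRing R] [Module R M] (p : ℕ) :
    KM M n p →ₗ[R] (Finset (Fin n) → M) where
  toFun f s := if h : s.card = p then f ⟨s, h⟩ else 0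
  map_add' f g := by
    ext s
    simp only [Pi.add_apply]
    split_ifs <;> simp
  map_smul' r f := by
    ext s
    simp only [Pi.smul_apply, RingHom.id_apply]
    split_ifs <;> simp

variable [Module R M]

theorem koszulExt_coe (f : KM M n p) (s : {s : Finset (Fin n) // s.card = p}) :
    koszulExt R p f s = f s :=
  dif_pos s.2

theorem koszulExt_of_card_ne (f : KM M n p) {s : Finset (Fin n)} (hs : s.card ≠ p) :
    koszulExt R p f s = 0 :=
  dif_neg hs

theorem koszulExt_injective : Function.Injective (koszulExt R p : KM M n p → _) := by
  intro f g h
  ext s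
  rw [← koszulExt_coe (R := R) f, h, koszulExt_coe]

theorem koszulExt_comp_val {F : Finset (Fin n) → M} (hF : ∀ s, s.card ≠ p → F s = 0) :
    koszulExt R p (fun s => F s) = F := by
  ext s
  by_cases hs : s.card = p
  · exact koszulExt_coe (R := R) (fun s => F s) ⟨s, hs⟩
  · rw [koszulExt_of_card_ne _ hs, hF s hs]

theorem kd_apply (y : Fin n → R) (f : KM M n p) (t : {s : Finset (Fin n) // s.card = p + 1}) :
    kd y p f t = koszulD M y (koszulExt R p f) t := by
  rw [koszulD_apply, ← Finset.sum_attach]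
  refine Finset.sum_congr rfl fun j _ => ?_
  congr 1
  exact (koszulExt_coe (R := R) f _).symm

theorem koszulExt_kd (y : Fin n → R) (f : KM M n p) :
    koszulExt R (p + 1) (kd y p f) = koszulD M y (koszulExt R p f) := by
  rw [funext (kd_apply y f)]
  refine koszulExt_comp_val fun t ht => ?_
  rw [koszulD_apply]
  refine Finset.sum_eq_zero fun j hj => ?_
  have : (t.erase j).card ≠ p := fun h => ht (by rw [← Finset.card_erase_add_one hj, h])
  rw [koszulExt_of_card_ne f this, smul_zero]

theorem kd_kd (y : Fin n → R) (f : KM M n p) : kd y (p + 1) (kd y p f) = 0 :=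
  koszulExt_injective (by rw [koszulExt_kd, koszulExt_kd, koszulD_koszulD, map_zero])

theorem smul_mem_range_kd_of_mem_kZ (y : Fin n → R) (j : Fin n) {g : KM M n (p + 1)}
    (hg : g ∈ kZ y M (p + 1)) : y j • g ∈ LinearMap.range (kd y p) := by
  let h : KM M n p := fun s => koszulContract R M j (koszulExt R (p + 1) g) s
  have h_ext : koszulExt R p h = koszulContract R M j (koszulExt R (p + 1) g) := by
    refine koszulExt_comp_val fun s hs => ?_
    by_cases hj : j ∈ s
    · exact koszulContract_of_mem hj _
    · rw [koszulContract_of_notMem hj, koszulExt_of_card_ne, smul_zero]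
      rwa [Finset.card_insert_of_notMem hj, Ne, Nat.succ_inj]
  refine ⟨h, koszulExt_injective (R := R) ?_⟩
  rw [koszulExt_kd, h_ext, map_smul, ← koszulD_koszulContract_add, ← koszulExt_kd,
    LinearMap.mem_ker.1 hg, map_zero, map_zero, add_zero]

theorem smul_mem_range_kd_of_mem_span {y : Fin n → R} {r : R} (hr : r ∈ Ideal.span (Set.range y))
    {g : KM M n (p + 1)} (hg : g ∈ kZ y M (p + 1)) : r • g ∈ LinearMap.range (kd y p) := by
  suffices Ideal.span (Set.range y) ≤
      (LinearMap.range (kd y p)).comap (LinearMap.toSpanSingleton R _ g) from this hr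
  exact Ideal.span_le.2 (Set.range_subset_iff.2 fun j => smul_mem_range_kd_of_mem_kZ y j hg)

theorem mem_kZ_zero_iff {y : Fin n → R} {f : KM M n 0} :
    f ∈ kZ y M 0 ↔ ∀ k, y k • f ⟨∅, rfl⟩ = 0 := by
  have h_single (k : Fin n) : kd y 0 f ⟨{k}, rfl⟩ = y k • f ⟨∅, rfl⟩ := by
    rw [kd_apply, koszulD_apply, Finset.sum_singleton, Finset.erase_singleton,
      ← koszulExt_coe (R := R) f]
    simp [koszulSign, Finset.filter_singleton]
  rw [kZ, LinearMap.mem_ker]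
  refine ⟨fun hf k => by rw [← h_single, hf, Pi.zero_apply], fun hf => ?_⟩
  ext ⟨t, ht⟩
  obtain ⟨k, rfl⟩ := Finset.card_eq_one.1 ht
  rw [h_single, hf, Pi.zero_apply]

end KoszulGraded

section KoszulTransition

variable {M : Type} [AddCommGroup M] [Module R M] {n p : ℕ}

theorem kt_zero (x : Fin n → R) (f : KM M n p) : kt x 0 p f = f := by
  ext s
  simp [kt]

theorem kt_kt (x : Fin n → R) (e e' : ℕ) (f : KM M n p) :
    kt x e' p (kt x e p f) = kt x (e + e') p f := by
  ext s
  simp [kt, smul_smul, ← pow_add, add_comm]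

theorem kt_kd_of_add_eq (x : Fin n → R) {u e v : ℕ} (h : u + e = v) (f : KM M n p) :
    kt x e (p + 1) (kd (fun j => x j ^ u) p f) = kd (fun j => x j ^ v) p (kt x e p f) := by
  subst h
  exact LinearMap.congr_fun (kt_kd x u e p) f

theorem kt_succ_eq_zero {x : Fin n → R} {h : KM M n (p + 1)} (hx : ∀ k t, x k • h t = 0) (e : ℕ) :
    kt x (e + 1) (p + 1) h = 0 := by
  ext t
  obtain ⟨k, hk⟩ : t.1.Nonempty := Finset.card_pos.1 (by rw [t.2]; exact p.succ_pos)
  change (∏ j ∈ t.1, x j) ^ (e + 1) • h t = 0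
  rw [pow_succ, ← Finset.prod_erase_mul _ _ hk, mul_smul, mul_smul, hx, smul_zero, smul_zero]

variable {M' : Type} [AddCommGroup M'] [Module R M'] (π : M →ₗ[R] M')

theorem kd_compLeft (y : Fin n → R) (f : KM M n p) :
    kd y p (π.compLeft _ f) = π.compLeft _ (kd y p f) := by
  ext t
  simp [kd, map_sum]

theorem kt_compLeft (x : Fin n → R) (e : ℕ) (f : KM M n p) :
    kt x e p (π.compLeft _ f) = π.compLeft _ (kt x e p f) := by
  ext s
  simp [kt]

theorem compLeft_mem_kZ {y : Fin n → R} {f : KM M n p} (hf : f ∈ kZ y M p) :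
    π.compLeft _ f ∈ kZ y M' p := by
  rw [kZ, LinearMap.mem_ker, kd_compLeft, LinearMap.mem_ker.1 hf, map_zero]

theorem compLeft_mem_kB {y : Fin n → R} {f : KM M n p} (hf : f ∈ kB y M p) :
    π.compLeft _ f ∈ kB y M' p := by
  cases p with
  | zero =>
    rw [kB, Submodule.mem_bot] at hf ⊢
    rw [hf, map_zero]
  | succ q =>
    obtain ⟨g, rfl⟩ := hf
    exact ⟨π.compLeft _ g, kd_compLeft π y g⟩

end KoszulTransition

section KoszulStable

variable {M M' : Type} [AddCommGroup M] [Module R M] [AddCommGroup M'] [Module R M']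
  {n p : ℕ} {x : Fin n → R}

/-- Elementwise surjectivity of `λ^p : H^p(x; M) → colim_u H^p(x^u; M)`: along the transition
maps, every `p`-cocycle for a power of `x` becomes cohomologous to the image of a `p`-cocycle for
`x` itself. Unlike `LambdaSurj`, this form can be chased through quotients of `M`. -/
def IsKoszulStable (x : Fin n → R) (M : Type) [AddCommGroup M] [Module R M] (p : ℕ) : Prop :=
  ∀ u : ℕ, ∀ f ∈ kZ (fun j => x j ^ (u + 1)) M p, ∃ e : ℕ, ∃ g ∈ kZ x M p,
    kt x e p f - kt x (u + e) p g ∈ kB (fun j => x j ^ (u + e + 1)) M p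

theorem directedSystem_ktH (x : Fin n → R) (M : Type) [AddCommGroup M] [Module R M] (p : ℕ) :
    DirectedSystem (fun u : ℕ => Hk (fun j => x j ^ (u + 1)) M p)
      (fun u v h => ktH x M p u v h) where
  map_self u z := by
    obtain ⟨z, rfl⟩ := Submodule.Quotient.mk_surjective _ z
    refine congrArg Submodule.Quotient.mk (Subtype.ext ?_)
    change kt x (u - u) p z.1 = z.1
    rw [Nat.sub_self, kt_zero]
  map_map w v u huv hvw z := by
    obtain ⟨z, rfl⟩ := Submodule.Quotient.mk_surjective _ z
    refine congrArg Submodule.Quotient.mk (Subtype.ext ?_)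
    change kt x (w - v) p (kt x (v - u) p z.1) = kt x (w - u) p z.1
    rw [kt_kt, add_comm, Nat.sub_add_sub_cancel hvw huv]

theorem LambdaSurj.isKoszulStable (h : LambdaSurj x M p) : IsKoszulStable x M p := by
  intro u f hf
  have := directedSystem_ktH x M p
  obtain ⟨z, hz⟩ := h (Module.DirectLimit.of R ℕ _ (fun u v h => ktH x M p u v h) u
    (Submodule.Quotient.mk ⟨f, hf⟩))
  rw [klambda, LinearMap.comp_apply] at hz
  generalize castHk M p _ z = w at hz
  obtain ⟨⟨g, hg⟩, rfl⟩ := Submodule.Quotient.mk_surjective _ w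
  rw [← Module.DirectLimit.of_f (f := fun u v h => ktH x M p u v h) (hij := Nat.zero_le u)] at hz
  obtain ⟨v, huv, hv⟩ := Module.DirectLimit.exists_eq_of_of_eq hz.symm
  obtain ⟨e, rfl⟩ := Nat.exists_eq_add_of_le huv
  have hB := ((Submodule.Quotient.eq _).1 hv).1
  change kt x (u + e - u) p f - kt x (u + e - u) p (kt x (u - 0) p g) ∈ _ at hB
  rw [kt_kt, Nat.sub_zero, Nat.add_sub_cancel_left] at hB
  exact ⟨e, g, by simpa only [zero_add, pow_one] using hg, hB⟩

theorem IsKoszulStable.congr (h : IsKoszulStable x M p) (φ : M ≃ₗ[R] M') :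
    IsKoszulStable x M' p := by
  intro u f hf
  obtain ⟨e, g, hg, hB⟩ := h u _ (compLeft_mem_kZ φ.symm.toLinearMap hf)
  refine ⟨e, _, compLeft_mem_kZ φ.toLinearMap hg, ?_⟩
  have h_cancel : φ.toLinearMap.compLeft _ (φ.symm.toLinearMap.compLeft _ f) = f :=
    funext fun s => φ.apply_symm_apply (f s)
  simpa only [map_sub, ← kt_compLeft, h_cancel] using compLeft_mem_kB φ.toLinearMap hB

theorem kt_one_mem_kZ_of_kd_eq_smul {r : R} (hr : ∀ m : M, r • m = 0 → ∀ k, x k • m = 0) {u : ℕ}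
    {f : KM M n p} {h : KM M n (p + 1)} (hf : kd (fun j => x j ^ (u + 1)) p f = r • h) :
    kt x 1 (p + 1) h ∈ kZ (fun j => x j ^ (u + 1 + 1)) M (p + 1) := by
  have h_smul : r • kd (fun j => x j ^ (u + 1)) (p + 1) h = 0 := by rw [← map_smul, ← hf, kd_kd]
  rw [kZ, LinearMap.mem_ker, ← kt_kd_of_add_eq x rfl]
  exact kt_succ_eq_zero (fun k t => hr _ (congrFun h_smul t) k) 0

theorem IsKoszulStable.exists_sub_sub_smul_mem_kZ (h_succ : IsKoszulStable x M (p + 1)) {r : R}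
    (hr_mem : r ∈ Ideal.span (Set.range x)) (hr : ∀ m : M, r • m = 0 → ∀ k, x k • m = 0) {u : ℕ}
    {f : KM M n p} {h : KM M n (p + 1)} (hf : kd (fun j => x j ^ (u + 1)) p f = r • h) :
    ∃ (e : ℕ) (f₀ w : KM M n p), (∃ g, kd x p f₀ = r • g) ∧
      kt x e p f - kt x (u + e) p f₀ - r • w ∈ kZ (fun j => x j ^ (u + e + 1)) M p := by
  obtain ⟨e, g, hg, w, hw⟩ := h_succ (u + 1) _ (kt_one_mem_kZ_of_kd_eq_smul hr hf)
  rw [kt_kt, add_assoc u 1 e] at hw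
  obtain ⟨f₀, hf₀⟩ := smul_mem_range_kd_of_mem_span hr_mem hg
  have h_kt_f₀ : kd (fun j => x j ^ (u + (1 + e) + 1)) p (kt x (u + (1 + e)) p f₀) =
      r • kt x (u + (1 + e)) (p + 1) g := by
    rw [← kt_kd_of_add_eq x (add_comm 1 _), ← map_smul, ← hf₀]
    simp only [pow_one]
  refine ⟨1 + e, f₀, w, ⟨g, hf₀⟩, ?_⟩
  rw [kZ, LinearMap.mem_ker, map_sub, map_sub, map_smul, hw, h_kt_f₀,
    ← kt_kd_of_add_eq x (add_right_comm u 1 (1 + e)), hf, map_smul, smul_sub, sub_self]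

theorem IsKoszulStable.of_exact (h : IsKoszulStable x M p) (h_succ : IsKoszulStable x M (p + 1))
    {r : R} (hr_mem : r ∈ Ideal.span (Set.range x))
    (hr : ∀ m : M, r • m = 0 → ∀ k, x k • m = 0) {π : M →ₗ[R] M'}
    (hπ : Function.Surjective π) (h_exact : Function.Exact (fun m : M => r • m) π) :
    IsKoszulStable x M' p := by
  have h_exact_compLeft (q : ℕ) (g : KM M n q) : π.compLeft _ g = 0 ↔ ∃ g', g = r • g' := by
    refine ⟨fun hg => ?_, ?_⟩
    · choose g' hg' using fun s => (h_exact (g s)).1 (congrFun hg s)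
      exact ⟨g', (funext hg').symm⟩
    · rintro ⟨g', rfl⟩
      exact funext fun s => h_exact.apply_apply_eq_zero (g' s)
  intro u f' hf'
  obtain ⟨f, rfl⟩ : ∃ f : KM M n p, π.compLeft _ f = f' := hπ.comp_left f'
  rw [kZ, LinearMap.mem_ker, kd_compLeft, h_exact_compLeft] at hf'
  obtain ⟨h_lift, hf⟩ := hf'
  obtain ⟨e, f₀, w, hf₀, hz⟩ := h_succ.exists_sub_sub_smul_mem_kZ hr_mem hr hf
  obtain ⟨e', f₁, hf₁, hB⟩ := h (u + e) _ hz
  refine ⟨e + e', π.compLeft _ (f₀ + f₁), ?_, ?_⟩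
  · rw [kZ, LinearMap.mem_ker, kd_compLeft, map_add, LinearMap.mem_ker.1 hf₁, add_zero]
    exact (h_exact_compLeft _ _).2 hf₀
  · have hw : π.compLeft _ (r • w) = 0 := (h_exact_compLeft p _).2 ⟨w, rfl⟩
    have hB' := compLeft_mem_kB π hB
    simp only [map_sub, ← kt_compLeft, hw, map_zero, sub_zero] at hB'
    simpa only [map_add, kt_kt, sub_sub, ← add_assoc] using hB'

theorem IsKoszulStable.smul_eq_zero (h : IsKoszulStable x M 0) {m : M}
    (hm : ∀ k, ∃ t : ℕ, x k ^ t • m = 0) (k : Fin n) : x k • m = 0 := by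
  choose t ht using hm
  have h_cocycle : (fun _ => m) ∈ kZ (fun j => x j ^ (Finset.univ.sup t + 1)) M 0 := by
    refine mem_kZ_zero_iff.2 fun j => ?_
    have hle : t j ≤ Finset.univ.sup t + 1 :=
      (Finset.le_sup (Finset.mem_univ j)).trans (Nat.le_succ _)
    change x j ^ (Finset.univ.sup t + 1) • m = 0
    rw [← Nat.sub_add_cancel hle, pow_add, mul_smul, ht, smul_zero]
  obtain ⟨e, g, hg, hB⟩ := h _ _ h_cocycle
  have h_eq : m = g ⟨∅, rfl⟩ := by
    simpa [kt] using sub_eq_zero.1 (congrFun ((Submodule.mem_bot R).1 hB) ⟨∅, rfl⟩)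
  rw [h_eq]
  exact mem_kZ_zero_iff.1 hg k

end KoszulStable

section WeakSequence

variable {M : Type} [AddCommGroup M] [Module R M] {n : ℕ} {x : Fin n → R}

theorem IsKoszulStable.smul_mem {P : Submodule R M} (h : IsKoszulStable x (M ⧸ P) 0) {m : M}
    (hm : ∀ k, ∃ t : ℕ, x k ^ t • m ∈ P) (k : Fin n) : x k • m ∈ P := by
  rw [← Submodule.Quotient.mk_eq_zero, Submodule.Quotient.mk_smul]
  refine h.smul_eq_zero (fun k => ?_) k
  obtain ⟨t, ht⟩ := hm k
  exact ⟨t, by rwa [← Submodule.Quotient.mk_smul, Submodule.Quotient.mk_eq_zero]⟩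

theorem IsUncondFilterRegSeq.smul_mem_of_pow_smul_mem {I : Ideal R} (hxI : ∀ j, x j ∈ I)
    (hfr : IsUncondFilterRegSeq I M x) {e : Fin n → ℕ} {S : Set (Fin n)}
    (h : IsKoszulStable x (M ⧸ spanSMulTop M (fun k => x k ^ e k) S) 0) {i : Fin n} (hi : i ∉ S)
    {m : M} (hm : x i ^ e i • m ∈ spanSMulTop M (fun k => x k ^ e k) S) (k : Fin n) :
    x k • m ∈ spanSMulTop M (fun k => x k ^ e k) S :=
  h.smul_mem (fun k => hfr.exists_pow_smul_mem_of_pow_smul_mem (hxI k) e hi hm) k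

theorem IsUncondFilterRegSeq.isKoszulStable_quotient {I : Ideal R} (hxI : ∀ j, x j ∈ I)
    (hfr : IsUncondFilterRegSeq I M x) (hstable : ∀ p < n, IsKoszulStable x M p)
    {e : Fin n → ℕ} (he : ∀ k, 0 < e k) (S : Set (Fin n)) {p : ℕ} (hp : p + S.ncard < n) :
    IsKoszulStable x (M ⧸ spanSMulTop M (fun k => x k ^ e k) S) p := by
  induction S, S.toFinite using Set.Finite.induction_on generalizing p with
  | empty =>
    rw [Set.ncard_empty] at hp
    exact (hstable p hp).congr (Submodule.quotEquivOfEqBot _ (spanSMulTop_empty _)).symm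
  | @insert j S hj _ ih =>
    rw [Set.ncard_insert_of_notMem hj] at hp
    refine (ih (p := p) (by lia)).of_exact (ih (by lia)) (r := x j ^ e j)
      (Ideal.pow_mem_of_mem _ (Ideal.subset_span (Set.mem_range_self j)) _ (he j)) ?_
      (Submodule.factor_surjective _) (exact_smul_factor_spanSMulTop_insert _ S j)
    intro m hm k
    obtain ⟨m, rfl⟩ := Submodule.Quotient.mk_surjective _ m
    rw [← Submodule.Quotient.mk_smul, Submodule.Quotient.mk_eq_zero] at hm ⊢
    exact hfr.smul_mem_of_pow_smul_mem hxI (ih (by lia)) hj hm k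

theorem IsUncondFilterRegSeq.isUncondWeakSeq {I : Ideal R} (hxI : ∀ j, x j ∈ I)
    (hfr : IsUncondFilterRegSeq I M x) (hstable : ∀ p < n, IsKoszulStable x M p) :
    IsUncondWeakSeq (Ideal.span (Set.range x)) M x := by
  intro σ α hα i m hm c hc
  let e : Fin n → ℕ := α ∘ σ.symm
  have h_pSpan : pSpan M (fun k => x (σ k) ^ α k) i =
      spanSMulTop M (fun k => x k ^ e k) (σ '' {j | j < i}) := by
    rw [← spanSMulTop_comp]
    simp only [e, Function.comp_def, Equiv.symm_apply_apply]
    rfl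
  have hi : σ i ∉ σ '' {j | j < i} := by simp
  have h_card : 0 + (σ '' {j | j < i}).ncard < n := by
    rw [zero_add]
    simpa using Set.ncard_lt_card (s := σ '' {j | j < i}) (fun h => hi (h ▸ Set.mem_univ _))
  rw [h_pSpan] at hm ⊢
  have h_gen : ∀ k, x k • m ∈ spanSMulTop M (fun k => x k ^ e k) (σ '' {j | j < i}) :=
    hfr.smul_mem_of_pow_smul_mem hxI
      (hfr.isKoszulStable_quotient hxI hstable (fun _ => hα _) _ h_card) hi (by simpa [e] using hm)
  suffices Ideal.span (Set.range x) ≤ (spanSMulTop M (fun k => x k ^ e k) (σ '' {j | j < i})).comap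
      (LinearMap.toSpanSingleton R M m) from this hc
  exact Ideal.span_le.2 (Set.range_subset_iff.2 h_gen)

end WeakSequence

section USDSequence

variable {M : Type} [AddCommGroup M] [Module R M] {n : ℕ} {x : Fin n → R} {I : Ideal R}

theorem IsUncondWeakSeq.smul_mem_pSpan_of_le (h : IsUncondWeakSeq I M x) (σ : Equiv.Perm (Fin n))
    {α : Fin n → ℕ} (hα : ∀ k, 0 < α k) {i j : Fin n} (hij : i ≤ j) {e : ℕ} (he : 0 < e) {m : M}
    (hm : x (σ j) ^ e • m ∈ pSpan M (fun k => x (σ k) ^ α k) i) {c : R} (hc : c ∈ I) :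
    c • m ∈ pSpan M (fun k => x (σ k) ^ α k) i := by
  have h_pSpan : pSpan M (fun k => x (σ k) ^ α k) i =
      pSpan M (fun k => x ((Equiv.swap i j).trans σ k) ^ Function.update α i e k) i := by
    refine spanSMulTop_congr fun k (hk : k < i) => ?_
    simp only [Equiv.trans_apply, Equiv.swap_apply_of_ne_of_ne hk.ne (hk.trans_le hij).ne,
      Function.update_of_ne hk.ne]
  have he_pos : ∀ k, 0 < Function.update α i e k := fun k => by
    rcases eq_or_ne k i with rfl | hk
    · rwa [Function.update_self]
    · rw [Function.update_of_ne hk]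
      exact hα k
  rw [h_pSpan] at hm ⊢
  exact h _ _ he_pos i m (by simpa using hm) c hc

theorem IsUncondWeakSeq.isUSDSeq (h : IsUncondWeakSeq I M x) (hx : ∀ k, x k ∈ I) :
    IsUSDSeq M x := by
  intro σ α hα i j hij m
  have hxj : x (σ j) ^ α j ∈ I := Ideal.pow_mem_of_mem I (hx _) _ (hα j)
  refine ⟨fun hm => ?_, fun hm => by rw [mul_smul]; exact Submodule.smul_mem _ _ hm⟩
  have h_sq : x (σ j) ^ (α j + α j) • m ∈ pSpan M (fun k => x (σ k) ^ α k) i := by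
    rw [pow_add, mul_smul]
    exact h σ α hα i _ (by rwa [smul_smul]) _ hxj
  exact h.smul_mem_pSpan_of_le σ hα hij (Nat.add_pos_left (hα j) _) h_sq hxj

end USDSequence

theorem lemma_2_4_general (I : Ideal R) (M : Type) [AddCommGroup M] [Module R M] {n : ℕ}
    (x : Fin n → R) (hxI : ∀ j, x j ∈ I) (hfr : IsUncondFilterRegSeq I M x)
    (hsurj : ∀ i : ℕ, i < n → LambdaSurj x M i) :
    IsUncondWeakSeq (Ideal.span (Set.range x)) M x ∧ IsUSDSeq M x := by
  have h_weak : IsUncondWeakSeq (Ideal.span (Set.range x)) M x :=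
    hfr.isUncondWeakSeq hxI fun p hp => (hsurj p hp).isKoszulStable
  exact ⟨h_weak, h_weak.isUSDSeq fun k => Ideal.subset_span (Set.mem_range_self k)⟩

/-- **Lemma 2.4.** Let `x₁, …, xₙ` be a sequence of elements of the ideal `I` which forms an
unconditioned `I`-filter regular sequence on `M`. Assume that for every `0 ≤ i ≤ n-1` the
canonical map `λ^i_M : H^i(x₁,…,xₙ; M) → H^i_{⟨x₁,…,xₙ⟩}(M)` from Koszul cohomology to local
cohomology is surjective. Then `x₁, …, xₙ` is an unconditioned `⟨x₁,…,xₙ⟩`-weak sequence on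
`M`; in particular, it is an u.s.d-sequence on `M`. -/
theorem lemma_2_4 [IsNoetherianRing R] (I : Ideal R)
    (M : Type) [AddCommGroup M] [Module R M] [Module.Finite R M]
    {n : ℕ} (x : Fin n → R) (hxI : ∀ j, x j ∈ I)
    (hfr : IsUncondFilterRegSeq I M x)
    (hsurj : ∀ i : ℕ, i < n → LambdaSurj x M i) :
    IsUncondWeakSeq (Ideal.span (Set.range x)) M x ∧ IsUSDSeq M x :=
  lemma_2_4_general I M x hxI hfr hsurj
end
end

section
/- Let ℓ be a natural number and let x_1,...,x_n be elements of a^{2ℓ}. Then the following are equivalent: (i) x_1,...,x_n is an a^ℓ-weak sequence on M; (ii) a^ℓ · H^i_a(M) = 0 for all 0 ≤ i < n and x_1,...,x_n is an a-filter regular sequence on M. -/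
/-!
Formalization of a statement from "A theory of relative generalized Cohen-Macaulay modules"
by Divaani-Aazar, Ghanbari Doust, Tousi and Zakeri.

Throughout, `R` is a commutative Noetherian ring and `M` a finitely generated `R`-module.
Conventions used below:
* `locH I i M` is the local cohomology module `H^i_I(M)` (Mathlib's `localCohomology`).
* Conditions `cd(I,M) = c`, `ara(I,M) = n`, `f_I(M) = f`, `grade(I,M) = r` are expressed by
  the predicates `IsCd`, `IsAra`, `IsFinDim`, `IsGrade`.
* Sequences are given as functions `Fin r → R`; `pSpan M x i = ⟨x_0,…,x_{i-1}⟩M`.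
* Koszul (co)homology is defined via the explicit (co)chain complex on the `p`-element
  subsets of `{0,…,n-1}`, and the canonical map `λ^i` into local cohomology is the structure
  map (at exponent 1) into the direct limit of Koszul cohomologies of powers of the sequence,
  which is the realization of `H^i_{⟨x⟩}(M)` used in the paper (2.1(iv)).
-/

open CategoryTheory

noncomputable section

variable {R : Type} [CommRing R]

/-! ### Local cohomology, cohomological dimension, arithmetic rank -/

/-- The `i`-th local cohomology module `H^i_I(M)`. -/
abbrev locH (I : Ideal R) (i : ℕ) (M : Type) [AddCommGroup M] [Module R M] : ModuleCat R :=
  (localCohomology I i).obj (ModuleCat.of R M)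

/-- `cd(I, M) = c`: the cohomological dimension of `I` on `M` equals `c`, i.e.
`H^c_I(M) ≠ 0` and `H^i_I(M) = 0` for all `i > c`. -/
def IsCd (I : Ideal R) (M : Type) [AddCommGroup M] [Module R M] (c : ℕ) : Prop :=
  Nontrivial (locH I c M) ∧ ∀ i : ℕ, c < i → Subsingleton (locH I i M)

/-- `f_I(M) = f`: the `I`-finiteness dimension of `M` equals `f`, i.e. `f` is the least
integer such that `H^f_I(M)` is not finitely generated. -/
def IsFinDim (I : Ideal R) (M : Type) [AddCommGroup M] [Module R M] (f : ℕ) : Prop :=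
  (∀ i : ℕ, i < f → Module.Finite R (locH I i M)) ∧ ¬ Module.Finite R (locH I f M)

/-- `M` is `I`-relative generalized Cohen-Macaulay: `cd(I,M) ≤ 0` or `cd(I,M) = f_I(M)`. -/
def IsRelGCM (I : Ideal R) (M : Type) [AddCommGroup M] [Module R M] : Prop :=
  (∀ i : ℕ, 0 < i → Subsingleton (locH I i M)) ∨
    ∃ c : ℕ, IsCd I M c ∧ IsFinDim I M c

/-- `ara(I, M) = n`: the arithmetic rank of `I` with respect to `M` equals `n`, i.e. `n` is the
least integer such that there are `x_1, …, x_n ∈ R` with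
`Rad(⟨x_1,…,x_n⟩ + Ann M) = Rad(I + Ann M)`. -/
def IsAra (I : Ideal R) (M : Type) [AddCommGroup M] [Module R M] (n : ℕ) : Prop :=
  IsLeast {k : ℕ | ∃ x : Fin k → R,
    (Ideal.span (Set.range x) + Module.annihilator R M).radical
      = (I + Module.annihilator R M).radical} n

/-- `x_1, …, x_c` is an `I`-relative system of parameters of `M` (where `c = cd(I,M)`):
the `x_i` lie in `I` and `Rad(⟨x_1,…,x_c⟩ + Ann M) = Rad(I + Ann M)`. -/
def IsRsop (I : Ideal R) (M : Type) [AddCommGroup M] [Module R M] {c : ℕ}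
    (x : Fin c → R) : Prop :=
  (∀ j, x j ∈ I) ∧
    (Ideal.span (Set.range x) + Module.annihilator R M).radical
      = (I + Module.annihilator R M).radical

/-!
The local cohomology module `H^i(M)` is the direct limit of the modules `Ext^i(A ⧸ I ^ t, M)`. Each
of its elements is killed by a power of `I`, and short exact sequences induce long ones. If `I ^ l`
kills `0 :_M x`, then by Artin–Rees the positive local cohomology of `0 :_M x` vanishes, so that
`0 → M ⧸ (0 :_M x) → M → M ⧸ xM → 0` relates `H^i(M ⧸ xM)` to `H^i(M)` and `H^(i+1)(M)`. Both
implications then follow by induction on the length of the sequence, passing from `M` to `M ⧸ xM`.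

* If `I ^ l` kills `H^i(M ⧸ xM)`, it kills every `v ∈ H^(i+1)(M)` with `x v = 0`. Since
  `x ∈ I ^ (l + 1)`, the exponent of any power of `I` killing an arbitrary `v` can be lowered one
  step at a time until it reaches `l`.
* Conversely, suppose `I ^ l` kills `H^i(M)` and `H^(i+1)(M)`, and write `x = ∑ k, y k * z k` with
  `y k` and `z k` in `I ^ l`. Multiplication by `x` on `M ⧸ (0 :_M x)` factors as
  `M ⧸ (0 :_M x) → M ^ n → M`, with coefficients `z` and then `y`. Let `C` be the cokernel of the
  first map. As the `z k` kill `H^(i+1)(M)`, every element of `H^i(M ⧸ xM)` is, modulo the image of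
  `H^i(M)`, the image of some `c ∈ H^i(C)`. Then `I ^ l` carries `c` into the image of `H^i(M ^ n)`,
  whose elements vanish in `H^i(M ⧸ xM)` because the `y k` kill `H^i(M)`.
-/

universe u

section ExtComparison

open Limits Opposite

variable {A : Type u} [CommRing A] {X X' : ModuleCat.{u} A}

/-- The complex `Hom(P, Y)`, for a projective resolution `P`, as a chain complex in the opposite
category: its homology is how `_root_.Ext` is defined. -/
abbrev homComplexOp (P : ProjectiveResolution X) (Y : ModuleCat.{u} A) :
    ChainComplex (ModuleCat.{u} A)ᵒᵖ ℕ :=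
  (((linearYoneda A (ModuleCat.{u} A)).obj Y).rightOp.mapHomologicalComplex _).obj P.complex

/-- The morphism `Hom(P, Y) ⟶ Hom(P', Y)` induced by a morphism of resolutions `P' ⟶ P`. -/
abbrev homComplexOpMap {P : ProjectiveResolution X} {P' : ProjectiveResolution X'} {g : X' ⟶ X}
    (Y : ModuleCat.{u} A) (φ : ProjectiveResolution.Hom P' P g) :
    homComplexOp P' Y ⟶ homComplexOp P Y :=
  (((linearYoneda A (ModuleCat.{u} A)).obj Y).rightOp.mapHomologicalComplex _).map φ.hom

/-- The module of `n`-cocycles of `Hom(P, Y)`. -/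
abbrev homCocycles (P : ProjectiveResolution X) (Y : ModuleCat.{u} A) (n : ℕ) : ModuleCat.{u} A :=
  ((homComplexOp P Y).opcycles n).unop

namespace homCocycles

variable (P : ProjectiveResolution X) (Y : ModuleCat.{u} A) (n : ℕ)

/-- The inclusion of the cocycles into the cochains `P_n ⟶ Y`. -/
def toHom : homCocycles P Y n →ₗ[A] (P.complex.X n ⟶ Y) :=
  ((homComplexOp P Y).pOpcycles n).unop.hom

theorem toHom_injective : Function.Injective (toHom P Y n) :=
  (ModuleCat.mono_iff_injective ((homComplexOp P Y).pOpcycles n).unop).1 inferInstance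

theorem d_comp_toHom (z : homCocycles P Y n) :
    P.complex.d (n + 1) n ≫ toHom P Y n z = 0 :=
  congr(($((homComplexOp P Y).d_pOpcycles (n + 1) n)).unop.hom z)

theorem exists_toHom_eq (f : P.complex.X n ⟶ Y) (hf : P.complex.d (n + 1) n ≫ f = 0) :
    ∃ z, toHom P Y n z = f := by
  have exact_op : (ShortComplex.mk _ _ ((homComplexOp P Y).d_pOpcycles (n + 1) n)).Exact :=
    ShortComplex.exact_of_g_is_cokernel _
      ((homComplexOp P Y).opcyclesIsCokernel (n + 1) n (by simp))
  exact (ShortComplex.moduleCat_exact_iff _).1 exact_op.unop f hf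

/-- The homology of `Hom(P, Y)` is `_root_.Ext`. -/
def homologyEquiv : ((homComplexOp P Y).homology n).unop ≃ₗ[A]
    ((_root_.Ext A (ModuleCat.{u} A) n).obj (op X)).obj Y :=
  (P.isoLeftDerivedObj ((linearYoneda A (ModuleCat.{u} A)).obj Y).rightOp n).unop.toLinearEquiv

/-- The class in `_root_.Ext` of a cocycle. -/
def toOldExt : homCocycles P Y n →ₗ[A] ((_root_.Ext A (ModuleCat.{u} A) n).obj (op X)).obj Y :=
  homologyEquiv P Y n ∘ₗ ((homComplexOp P Y).homologyι n).unop.hom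

theorem toOldExt_surjective : Function.Surjective (toOldExt P Y n) :=
  (homologyEquiv P Y n).surjective.comp
    ((ModuleCat.epi_iff_surjective ((homComplexOp P Y).homologyι n).unop).1 inferInstance)

theorem toOldExt_eq_zero_iff (z : homCocycles P Y n) :
    toOldExt P Y n z = 0 ↔ ∃ y : P.complex.X ((ComplexShape.down ℕ).next n) ⟶ Y,
      P.complex.d n ((ComplexShape.down ℕ).next n) ≫ y = toHom P Y n z := by
  let K := homComplexOp P Y
  have exact_op : (ShortComplex.mk _ _ (K.homologyι_comp_fromOpcycles n _)).Exact :=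
    ShortComplex.exact_of_f_is_kernel _ (K.homologyIsKernel n _ rfl)
  have toHom_fromOpcycles (y : P.complex.X ((ComplexShape.down ℕ).next n) ⟶ Y) :
      toHom P Y n ((K.fromOpcycles n _).unop.hom y) = P.complex.d n _ ≫ y :=
    congr(($(K.p_fromOpcycles n _)).unop.hom y)
  have exact_iff := (ShortComplex.ShortExact.moduleCat_exact_iff_function_exact _).1 exact_op.unop z
  refine ((homologyEquiv P Y n).map_eq_zero_iff).trans (exact_iff.trans (exists_congr fun y => ?_))
  exact (toHom_injective P Y n).eq_iff.symm.trans (Eq.congr_left (toHom_fromOpcycles y))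

theorem smul_extMk (f : P.complex.X n ⟶ Y) (hf : P.complex.d (n + 1) n ≫ f = 0) (r : A) :
    r • P.extMk f (n + 1) rfl hf = P.extMk (r • f) (n + 1) rfl (by simp [hf]) := by
  rw [Abelian.Ext.smul_eq_comp_mk₀, P.extMk_comp_mk₀]
  simp only [Linear.comp_smul, Category.comp_id]

/-- The class in `Abelian.Ext` of a cocycle. -/
def toExt : homCocycles P Y n →ₗ[A] Abelian.Ext X Y n where
  toFun z := P.extMk (toHom P Y n z) (n + 1) rfl (d_comp_toHom P Y n z)
  map_add' z w := by simp only [map_add, P.add_extMk]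
  map_smul' r z := by simp only [map_smul, smul_extMk, RingHom.id_apply]

theorem toExt_surjective : Function.Surjective (toExt P Y n) := by
  intro e
  obtain ⟨f, hf, rfl⟩ := P.extMk_surjective e (n + 1) rfl
  obtain ⟨z, rfl⟩ := exists_toHom_eq P Y n f hf
  exact ⟨z, rfl⟩

theorem extMk_zero_eq_zero_iff (f : P.complex.X 0 ⟶ Y) (hf : P.complex.d 1 0 ≫ f = 0) :
    P.extMk f 1 rfl hf = 0 ↔ f = 0 := by
  refine ⟨fun h => ?_, fun h => by simp only [h, P.extMk_zero]⟩
  rw [← P.extEquivCohomologyClass.apply_eq_iff_eq, P.extEquivCohomologyClass_extMk,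
    P.extEquivCohomologyClass_zero, CochainComplex.HomComplex.CohomologyClass.mk_eq_zero_iff,
    CochainComplex.HomComplex.Cocycle.toSingleMk_mem_coboundaries_iff _ _ _ _ _ 1 (by simp)] at h
  obtain ⟨g, hg⟩ := h
  have isZero_one : IsZero (P.cochainComplex.X 1) := P.cochainComplex.isZero_of_isStrictlyLE 0 1
  rw [isZero_one.eq_of_src g 0, comp_zero] at hg
  rw [← cancel_epi (P.cochainComplexXIso (-(0 : ℕ)) 0 rfl).hom, ← hg, comp_zero]

theorem toExt_eq_zero_iff (z : homCocycles P Y n) :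
    toExt P Y n z = 0 ↔ ∃ y : P.complex.X ((ComplexShape.down ℕ).next n) ⟶ Y,
      P.complex.d n ((ComplexShape.down ℕ).next n) ≫ y = toHom P Y n z := by
  cases n with
  | zero =>
    have d_eq_zero : P.complex.d 0 ((ComplexShape.down ℕ).next 0) = 0 :=
      P.complex.shape _ _ (by simp)
    rw [d_eq_zero]
    simp only [zero_comp, exists_const, eq_comm (a := (0 : P.complex.X 0 ⟶ Y))]
    exact extMk_zero_eq_zero_iff P Y _ (d_comp_toHom P Y 0 z)
  | succ p =>
    rw [ChainComplex.next_nat_succ]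
    exact P.extMk_eq_zero_iff _ _ rfl (d_comp_toHom P Y (p + 1) z) p rfl

theorem ker_toOldExt : LinearMap.ker (toOldExt P Y n) = LinearMap.ker (toExt P Y n) := by
  ext z
  exact (toOldExt_eq_zero_iff P Y n z).trans (toExt_eq_zero_iff P Y n z).symm

variable {P} {P' : ProjectiveResolution X'} {g : X' ⟶ X} (φ : ProjectiveResolution.Hom P' P g)

/-- The map on cocycles induced by a morphism of resolutions. -/
def map : homCocycles P Y n →ₗ[A] homCocycles P' Y n :=
  (HomologicalComplex.opcyclesMap (homComplexOpMap Y φ) n).unop.hom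

theorem toHom_map (z : homCocycles P Y n) :
    toHom P' Y n (map Y n φ z) = φ.hom.f n ≫ toHom P Y n z :=
  congr(($(HomologicalComplex.p_opcyclesMap (homComplexOpMap Y φ) n)).unop.hom z)

theorem toExt_map (z : homCocycles P Y n) :
    toExt P' Y n (map Y n φ z) = (Abelian.Ext.mk₀ g).comp (toExt P Y n z) (zero_add n) := by
  simp only [toExt, LinearMap.coe_mk, AddHom.coe_mk, P.mk₀_comp_extMk _ _ rfl _ φ, toHom_map]

theorem toOldExt_map (z : homCocycles P Y n) :
    toOldExt P' Y n (map Y n φ z) =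
      ((_root_.Ext A (ModuleCat.{u} A) n).map g.op).app Y (toOldExt P Y n z) := by
  let F := ((linearYoneda A (ModuleCat.{u} A)).obj Y).rightOp
  let ψ := (HomologicalComplex.homologyMap (homComplexOpMap Y φ) n).unop.hom
  let ι := ((homComplexOp P Y).homologyι n).unop.hom
  have homologyEquiv_naturality (h : ((homComplexOp P Y).homology n).unop) :
      homologyEquiv P' Y n (ψ h) =
        ((_root_.Ext A (ModuleCat.{u} A) n).map g.op).app Y (homologyEquiv P Y n h) :=
    congr(($(P'.isoLeftDerivedObj_hom_naturality g P φ.hom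
      (by simpa using φ.hom_f_zero_comp_π_f_zero) F n)).unop.hom h).symm
  have homologyι_naturality :
      ((homComplexOp P' Y).homologyι n).unop.hom (map Y n φ z) = ψ (ι z) :=
    congr(($(HomologicalComplex.homologyι_naturality (homComplexOpMap Y φ) n)).unop.hom z).symm
  calc toOldExt P' Y n (map Y n φ z)
    _ = homologyEquiv P' Y n (ψ (ι z)) := congrArg (homologyEquiv P' Y n) homologyι_naturality
    _ = _ := homologyEquiv_naturality (ι z)

end homCocycles

/-- The comparison of the two models of `Ext` in Mathlib: derived functors of `Hom(-, Y)`, in terms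
of which local cohomology is defined, and shifted morphisms in the derived category, for which
long exact sequences are available. -/
def extEquiv (X Y : ModuleCat.{u} A) (n : ℕ) :
    ((_root_.Ext A (ModuleCat.{u} A) n).obj (op X)).obj Y ≃ₗ[A] Abelian.Ext X Y n :=
  let P := projectiveResolution X
  ((homCocycles.toOldExt P Y n).quotKerEquivOfSurjective
      (homCocycles.toOldExt_surjective P Y n)).symm ≪≫ₗ
    Submodule.quotEquivOfEq _ _ (homCocycles.ker_toOldExt P Y n) ≪≫ₗ
    (homCocycles.toExt P Y n).quotKerEquivOfSurjective (homCocycles.toExt_surjective P Y n)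

theorem extEquiv_toOldExt (Y : ModuleCat.{u} A) (n : ℕ)
    (z : homCocycles (projectiveResolution X) Y n) :
    extEquiv X Y n (homCocycles.toOldExt _ Y n z) = homCocycles.toExt _ Y n z := by
  have symm_toOldExt : ((homCocycles.toOldExt (projectiveResolution X) Y n).quotKerEquivOfSurjective
      (homCocycles.toOldExt_surjective _ Y n)).symm (homCocycles.toOldExt _ Y n z) =
        Submodule.Quotient.mk z := by
    rw [LinearEquiv.symm_apply_eq]
    rfl
  simp only [extEquiv, LinearEquiv.trans_apply, symm_toOldExt]
  rfl

theorem extEquiv_naturality (g : X' ⟶ X) (Y : ModuleCat.{u} A) (n : ℕ)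
    (e : ((_root_.Ext A (ModuleCat.{u} A) n).obj (op X)).obj Y) :
    extEquiv X' Y n (((_root_.Ext A (ModuleCat.{u} A) n).map g.op).app Y e) =
      (Abelian.Ext.mk₀ g).comp (extEquiv X Y n e) (zero_add n) := by
  let φ : ProjectiveResolution.Hom (projectiveResolution X') (projectiveResolution X) g :=
    ⟨ProjectiveResolution.lift g _ _, by
      simpa using ProjectiveResolution.lift_commutes_zero g (projectiveResolution X') _⟩
  obtain ⟨z, rfl⟩ := homCocycles.toOldExt_surjective (projectiveResolution X) Y n e
  rw [← homCocycles.toOldExt_map Y n φ, extEquiv_toOldExt, extEquiv_toOldExt,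
    homCocycles.toExt_map]

end ExtComparison

section LimExt

open Limits Opposite

variable {A : Type u} [CommRing A] (I : Ideal A)

/-- The projection `A ⧸ I ^ t ⟶ A ⧸ I ^ s` for `s ≤ t`. -/
def quotientPowMap {s t : ℕ} (h : s ≤ t) :
    ModuleCat.of A (A ⧸ I ^ t) ⟶ ModuleCat.of A (A ⧸ I ^ s) :=
  ModuleCat.ofHom (Submodule.mapQ _ _ LinearMap.id (Ideal.pow_le_pow_right h))

theorem quotientPowMap_self (t : ℕ) : quotientPowMap I le_rfl = 𝟙 (ModuleCat.of A (A ⧸ I ^ t)) :=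
  ModuleCat.hom_ext (Submodule.mapQ_id _)

theorem quotientPowMap_comp {r s t : ℕ} (h : r ≤ s) (h' : s ≤ t) :
    quotientPowMap I h' ≫ quotientPowMap I h = quotientPowMap I (h.trans h') := by
  ext
  rfl

/-- The transition map `Ext^i(A ⧸ I ^ s, M) → Ext^i(A ⧸ I ^ t, M)` for `s ≤ t`. -/
def extTransition (i : ℕ) (M : ModuleCat.{u} A) (s t : ℕ) (h : s ≤ t) :
    Abelian.Ext (ModuleCat.of A (A ⧸ I ^ s)) M i →ₗ[A]
      Abelian.Ext (ModuleCat.of A (A ⧸ I ^ t)) M i :=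
  (Abelian.Ext.mk₀ (quotientPowMap I h)).precompOfLinear A M (zero_add i)

variable {I} {i : ℕ} {M N : ModuleCat.{u} A}

theorem extTransition_apply {s t : ℕ} (h : s ≤ t)
    (e : Abelian.Ext (ModuleCat.of A (A ⧸ I ^ s)) M i) :
    extTransition I i M s t h e = (Abelian.Ext.mk₀ (quotientPowMap I h)).comp e (zero_add i) := rfl

theorem extTransition_comp {s t : ℕ} (h : s ≤ t)
    (e : Abelian.Ext (ModuleCat.of A (A ⧸ I ^ s)) M i) {k n : ℕ} (ω : Abelian.Ext M N k)
    (hn : i + k = n) :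
    extTransition I n N s t h (e.comp ω hn) = (extTransition I i M s t h e).comp ω hn := by
  simp only [extTransition_apply]
  exact (Abelian.Ext.comp_assoc _ _ _ _ _ (by lia)).symm

instance : DirectedSystem (fun t => Abelian.Ext (ModuleCat.of A (A ⧸ I ^ t)) M i)
    (extTransition I i M · · ·) where
  map_self t e := by
    rw [extTransition_apply, quotientPowMap_self, Abelian.Ext.mk₀_id_comp]
  map_map _ _ _ h h' e := by
    simp only [extTransition_apply, Abelian.Ext.mk₀_comp_mk₀_assoc, quotientPowMap_comp]

variable (I i M) in
/-- The direct limit of the modules `Ext^i(A ⧸ I ^ t, M)`, a model of the local cohomology module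
`H^i_I(M)` with explicit elements. -/
abbrev LimExt : Type u :=
  Module.DirectLimit (fun t => Abelian.Ext (ModuleCat.of A (A ⧸ I ^ t)) M i) (extTransition I i M)

namespace LimExt

/-- The class in the direct limit of an element of `Ext^i(A ⧸ I ^ t, M)`. -/
abbrev mk {t : ℕ} : Abelian.Ext (ModuleCat.of A (A ⧸ I ^ t)) M i →ₗ[A] LimExt I i M :=
  Module.DirectLimit.of A ℕ _ (extTransition I i M) t

/-- Composition with an element of `Ext^k(M, N)`. -/
def postcomp {k n : ℕ} (hn : i + k = n) :
    Abelian.Ext M N k →ₗ[A] LimExt I i M →ₗ[A] LimExt I n N where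
  toFun ω := Module.DirectLimit.map (fun _ => ω.postcompOfLinear A _ hn) fun _ _ h =>
    LinearMap.ext fun e => (extTransition_comp h e ω hn).symm
  map_add' ω ω' := by
    ext t e
    simp
  map_smul' r ω := by
    ext t e
    simp

theorem postcomp_mk {k n t : ℕ} (hn : i + k = n) (ω : Abelian.Ext M N k)
    (e : Abelian.Ext (ModuleCat.of A (A ⧸ I ^ t)) M i) :
    postcomp hn ω (mk e) = mk (e.comp ω hn) :=
  Module.DirectLimit.map_apply_of _
    (fun _ _ h => LinearMap.ext fun e => (extTransition_comp h e ω hn).symm) _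

theorem exists_mk (u : LimExt I i M) :
    ∃ (t : ℕ) (e : Abelian.Ext (ModuleCat.of A (A ⧸ I ^ t)) M i), mk e = u :=
  Module.DirectLimit.exists_of u

theorem mk_eq_zero_iff {t : ℕ} (e : Abelian.Ext (ModuleCat.of A (A ⧸ I ^ t)) M i) :
    mk e = 0 ↔ ∃ (s : ℕ) (h : t ≤ s), extTransition I i M t s h e = 0 := by
  refine ⟨Module.DirectLimit.of.zero_exact, fun ⟨s, h, he⟩ => ?_⟩
  rw [mk, ← Module.DirectLimit.of_f (hij := h), he, map_zero]

theorem postcomp_postcomp {k k' n n' m : ℕ} {L : ModuleCat.{u} A} (ω : Abelian.Ext L M k)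
    (ω' : Abelian.Ext M N k') (hn : i + k = n) (hn' : n + k' = n') (hm : k + k' = m)
    (u : LimExt I i L) :
    postcomp hn' ω' (postcomp hn ω u) = postcomp (by lia) (ω.comp ω' hm) u := by
  obtain ⟨t, e, rfl⟩ := u.exists_mk
  simp only [postcomp_mk]
  rw [Abelian.Ext.comp_assoc e ω ω' hn hm (hn'.symm ▸ hn.symm ▸ rfl)]

theorem exists_postcomp_eq {k k' n n' : ℕ} {L : ModuleCat.{u} A} {ω : Abelian.Ext L M k}
    {ω' : Abelian.Ext M N k'} {hn : i + k = n} {hn' : n + k' = n'}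
    (ext_exact : ∀ {X : ModuleCat.{u} A} (e : Abelian.Ext X M n), e.comp ω' hn' = 0 →
      ∃ e' : Abelian.Ext X L i, e'.comp ω hn = e)
    {u : LimExt I n M} (hu : postcomp hn' ω' u = 0) : ∃ v : LimExt I i L, postcomp hn ω v = u := by
  obtain ⟨t, e, rfl⟩ := u.exists_mk
  rw [postcomp_mk, mk_eq_zero_iff] at hu
  obtain ⟨s, h, he⟩ := hu
  rw [extTransition_comp] at he
  obtain ⟨e', he'⟩ := ext_exact _ he
  exact ⟨mk e', by rw [postcomp_mk, he', Module.DirectLimit.of_f]⟩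

variable (I i) in
/-- The functoriality of the direct limit in the module. -/
def map : (M ⟶ N) →ₗ[A] LimExt I i M →ₗ[A] LimExt I i N :=
  postcomp (add_zero i) ∘ₗ Abelian.Ext.linearEquiv₀.symm.toLinearMap

theorem map_apply (f : M ⟶ N) : map I i f = postcomp (add_zero i) (Abelian.Ext.mk₀ f) := rfl

@[simp]
theorem map_mk {t : ℕ} (f : M ⟶ N) (e : Abelian.Ext (ModuleCat.of A (A ⧸ I ^ t)) M i) :
    map I i f (mk e) = mk (e.comp (Abelian.Ext.mk₀ f) (add_zero i)) :=
  postcomp_mk _ _ _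

theorem map_id (u : LimExt I i M) : map I i (𝟙 M) u = u := by
  obtain ⟨t, e, rfl⟩ := u.exists_mk
  rw [map_mk, Abelian.Ext.comp_mk₀_id]

theorem map_map {L : ModuleCat.{u} A} (f : L ⟶ M) (g : M ⟶ N) (u : LimExt I i L) :
    map I i g (map I i f u) = map I i (f ≫ g) u := by
  rw [map_apply, map_apply, postcomp_postcomp _ _ _ _ (add_zero 0), Abelian.Ext.mk₀_comp_mk₀,
    map_apply]

theorem map_smul_id (r : A) (u : LimExt I i M) : map I i (r • 𝟙 M) u = r • u := by
  rw [_root_.map_smul, LinearMap.smul_apply, map_id]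

theorem map_zero_injective (f : M ⟶ N) [Mono f] : Function.Injective (map I 0 f) := by
  refine (injective_iff_map_eq_zero _).2 fun u hu => ?_
  obtain ⟨t, e, rfl⟩ := u.exists_mk
  rw [map_mk, mk_eq_zero_iff] at hu
  obtain ⟨s, h, he⟩ := hu
  rw [extTransition_comp] at he
  rw [mk_eq_zero_iff]
  exact ⟨s, h, Abelian.Ext.postcomp_mk₀_injective_of_mono _ f (he.trans (map_zero _).symm)⟩

section ShortExact

variable {S : ShortComplex (ModuleCat.{u} A)}

theorem exists_map_f_eq (hS : S.ShortExact) {u : LimExt I i S.X₂} (hu : map I i S.g u = 0) :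
    ∃ v, map I i S.f v = u :=
  exists_postcomp_eq (fun e he => Abelian.Ext.covariant_sequence_exact₂ _ hS e he) hu

variable (hS : S.ShortExact)

/-- The connecting homomorphism of a short exact sequence. -/
def δ : LimExt I i S.X₃ →ₗ[A] LimExt I (i + 1) S.X₁ :=
  postcomp rfl hS.extClass

theorem exists_map_g_eq {u : LimExt I i S.X₃} (hu : δ hS u = 0) : ∃ v, map I i S.g v = u :=
  exists_postcomp_eq (fun e he => Abelian.Ext.covariant_sequence_exact₃ _ hS e _ he) hu

theorem exists_δ_eq {u : LimExt I (i + 1) S.X₁} (hu : map I (i + 1) S.f u = 0) :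
    ∃ v, δ hS v = u :=
  exists_postcomp_eq (fun e he => Abelian.Ext.covariant_sequence_exact₁ _ hS e he _) hu

theorem δ_naturality {S' : ShortComplex (ModuleCat.{u} A)} (hS' : S'.ShortExact) (φ : S ⟶ S')
    (u : LimExt I i S.X₃) : δ hS' (map I i φ.τ₃ u) = map I (i + 1) φ.τ₁ (δ hS u) := by
  rw [map_apply, map_apply, δ, δ, postcomp_postcomp _ _ _ _ (zero_add 1),
    postcomp_postcomp _ _ _ _ (add_zero 1), hS.extClass_naturality hS']

end ShortExact

theorem exists_pow_le_torsionOf (u : LimExt I i M) : ∃ t, I ^ t ≤ Ideal.torsionOf A _ u := by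
  obtain ⟨t, e, rfl⟩ := u.exists_mk
  refine ⟨t, fun r hr => ?_⟩
  have smul_id_eq_zero : r • 𝟙 (ModuleCat.of A (A ⧸ I ^ t)) = 0 := by
    ext
    exact (Submodule.Quotient.mk_eq_zero _).2 ((I ^ t).mul_mem_right _ hr)
  rw [Ideal.mem_torsionOf_iff, ← map_smul, ← Abelian.Ext.mk₀_id_comp e, ← Abelian.Ext.smul_comp,
    ← Abelian.Ext.mk₀_smul, smul_id_eq_zero, Abelian.Ext.mk₀_zero, Abelian.Ext.zero_comp, map_zero]

theorem annihilator_le_annihilator :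
    Module.annihilator A M ≤ Module.annihilator A (LimExt I i M) := by
  intro r hr
  refine Module.mem_annihilator.2 fun u => ?_
  have smul_id_eq_zero : r • 𝟙 M = 0 := by
    ext m
    exact Module.mem_annihilator.1 hr m
  rw [← map_smul_id, smul_id_eq_zero, map_zero, LinearMap.zero_apply]

end LimExt

variable (I i M) in
/-- The canonical map from `Ext^i(A ⧸ I ^ t, M)` to local cohomology. -/
def extToLocalCohomology (t : ℕ) :
    ((_root_.Ext A (ModuleCat.{u} A) i).obj (op (ModuleCat.of A (A ⧸ I ^ t)))).obj M →ₗ[A]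
      (localCohomology I i).obj M :=
  ((colimit.ι (localCohomology.diagram (localCohomology.idealPowersDiagram I) i)
    (op (op t))).app M).hom

theorem extToLocalCohomology_map {s t : ℕ} (h : s ≤ t)
    (y : ((_root_.Ext A (ModuleCat.{u} A) i).obj (op (ModuleCat.of A (A ⧸ I ^ s)))).obj M) :
    extToLocalCohomology I i M t (((_root_.Ext A _ i).map (quotientPowMap I h).op).app M y) =
      extToLocalCohomology I i M s y :=
  congr((($(colimit.w (localCohomology.diagram (localCohomology.idealPowersDiagram I) i)
    (homOfLE h).op.op)).app M).hom y)

instance : PreservesFilteredColimitsOfSize.{0, 0} (forget (ModuleCat.{u} A)) :=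
  preservesFilteredColimitsOfSize_shrink.{0, u, 0, u} _

theorem exists_map_eq_zero_of_isColimit {D : Type} [SmallCategory D] [IsFiltered D]
    {G : D ⥤ ModuleCat.{u} A} {c : Cocone G} (hc : IsColimit c) {t : D} {y : G.obj t}
    (hy : c.ι.app t y = 0) : ∃ (s : D) (f : t ⟶ s), G.map f y = 0 := by
  obtain ⟨s, f, hf⟩ := (Limits.IsColimit.eq_iff' hc y 0).1 (hy.trans (map_zero _).symm)
  exact ⟨s, f, hf.trans (map_zero _)⟩

variable (I i M) in
/-- Evaluating at `M` the colimit of functors defining local cohomology gives a colimit. -/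
def isColimitEvaluation : IsColimit (((evaluation _ _).obj M).mapCocone
    (colimit.cocone (localCohomology.diagram (localCohomology.idealPowersDiagram I) i))) :=
  isColimitOfPreserves _ (colimit.isColimit _)

theorem exists_extToLocalCohomology_eq (m : (localCohomology I i).obj M) :
    ∃ t y, extToLocalCohomology I i M t y = m := by
  obtain ⟨t, y, hy⟩ := Concrete.isColimit_exists_rep _ (isColimitEvaluation I i M) m
  exact ⟨t.unop.unop, y, hy⟩

theorem exists_map_eq_zero_of_extToLocalCohomology_eq_zero {t : ℕ}
    {y : ((_root_.Ext A (ModuleCat.{u} A) i).obj (op (ModuleCat.of A (A ⧸ I ^ t)))).obj M}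
    (hy : extToLocalCohomology I i M t y = 0) :
    ∃ (s : ℕ) (h : t ≤ s), ((_root_.Ext A _ i).map (quotientPowMap I h).op).app M y = 0 := by
  obtain ⟨s, f, hf⟩ := exists_map_eq_zero_of_isColimit (isColimitEvaluation I i M) hy
  exact ⟨s.unop.unop, leOfHom f.unop.unop, hf⟩

theorem extEquiv_symm_extTransition {s t : ℕ} (h : s ≤ t)
    (e : Abelian.Ext (ModuleCat.of A (A ⧸ I ^ s)) M i) :
    (extEquiv _ M i).symm (extTransition I i M s t h e) =
      ((_root_.Ext A _ i).map (quotientPowMap I h).op).app M ((extEquiv _ M i).symm e) := by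
  rw [LinearEquiv.symm_apply_eq, extEquiv_naturality, LinearEquiv.apply_symm_apply,
    extTransition_apply]

namespace LimExt

variable (I i M) in
/-- The comparison of the direct limit with local cohomology. -/
def toLocalCohomology : LimExt I i M →ₗ[A] (localCohomology I i).obj M :=
  Module.DirectLimit.lift A ℕ _ _
    (fun t => extToLocalCohomology I i M t ∘ₗ (extEquiv _ M i).symm.toLinearMap)
    fun s t h e => by
      simp only [LinearMap.comp_apply, LinearEquiv.coe_coe, extEquiv_symm_extTransition,
        extToLocalCohomology_map]

theorem toLocalCohomology_mk {t : ℕ} (e : Abelian.Ext (ModuleCat.of A (A ⧸ I ^ t)) M i) :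
    toLocalCohomology I i M (mk e) = extToLocalCohomology I i M t ((extEquiv _ M i).symm e) :=
  Module.DirectLimit.lift_of _ _ _

theorem toLocalCohomology_injective : Function.Injective (toLocalCohomology I i M) := by
  refine (injective_iff_map_eq_zero _).2 fun u hu => ?_
  obtain ⟨t, e, rfl⟩ := u.exists_mk
  rw [toLocalCohomology_mk] at hu
  obtain ⟨s, h, he⟩ := exists_map_eq_zero_of_extToLocalCohomology_eq_zero hu
  rw [← extEquiv_symm_extTransition, LinearEquiv.map_eq_zero_iff] at he
  exact (mk_eq_zero_iff e).2 ⟨s, h, he⟩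

theorem toLocalCohomology_surjective : Function.Surjective (toLocalCohomology I i M) := by
  intro m
  obtain ⟨t, y, rfl⟩ := exists_extToLocalCohomology_eq m
  exact ⟨mk (extEquiv _ M i y), by rw [toLocalCohomology_mk, LinearEquiv.symm_apply_apply]⟩

variable (I i M) in
/-- Local cohomology is the direct limit `LimExt`. -/
def equivLocalCohomology : LimExt I i M ≃ₗ[A] (localCohomology I i).obj M :=
  LinearEquiv.ofBijective _ ⟨toLocalCohomology_injective, toLocalCohomology_surjective⟩

end LimExt
end LimExt

section ArtinRees

variable {A : Type u} [CommRing A]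

/-- The short complex `L → F → F ⧸ K` of a linear map `f : L → F` with range `K`. -/
abbrev quotientShortComplex {L F : Type u} [AddCommGroup L] [Module A L] [AddCommGroup F]
    [Module A F] (f : L →ₗ[A] F) {K : Submodule A F} (h : f.range = K) :
    ShortComplex (ModuleCat.{u} A) :=
  ModuleCat.shortComplexOfCompEqZero f K.mkQ <| by
    rw [← LinearMap.range_le_ker_iff, K.ker_mkQ, h]

theorem shortExact_quotientShortComplex {L F : Type u} [AddCommGroup L] [Module A L]
    [AddCommGroup F] [Module A F] {f : L →ₗ[A] F} (hf : Function.Injective f) {K : Submodule A F}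
    (h : f.range = K) : (quotientShortComplex f h).ShortExact :=
  ModuleCat.shortComplex_shortExact _ (LinearMap.exact_iff.2 (K.ker_mkQ.trans h.symm)) hf
    K.mkQ_surjective

/-- The short complex `K → F → F ⧸ K` of a submodule. -/
abbrev submoduleShortComplex {F : Type u} [AddCommGroup F] [Module A F] (K : Submodule A F) :
    ShortComplex (ModuleCat.{u} A) :=
  quotientShortComplex K.subtype K.range_subtype

theorem shortExact_submoduleShortComplex {F : Type u} [AddCommGroup F] [Module A F]
    (K : Submodule A F) : (submoduleShortComplex K).ShortExact :=
  shortExact_quotientShortComplex K.injective_subtype _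

/-- The morphism from `0 → V ∩ ker p → V → p(V) → 0` to `0 → ker p → F → L → 0`. -/
def shortComplexKerSubmoduleMap {F L : Type u} [AddCommGroup F] [Module A F] [AddCommGroup L]
    [Module A L] (p : F →ₗ[A] L) (V : Submodule A F) :
    (p.submoduleMap V).shortComplexKer ⟶ p.shortComplexKer where
  τ₁ := ModuleCat.ofHom (V.subtype.restrict fun _ hv => congrArg Subtype.val hv)
  τ₂ := ModuleCat.ofHom V.subtype
  τ₃ := ModuleCat.ofHom (V.map p).subtype

variable {I : Ideal A} {N : ModuleCat.{u} A}

theorem mk₀_subtype_comp_eq_zero {J : Ideal A} (hN : J ≤ Module.annihilator A N)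
    {L : ModuleCat.{u} A} (e : Abelian.Ext L N 0) :
    (Abelian.Ext.mk₀ (ModuleCat.ofHom (J • ⊤ : Submodule A L).subtype)).comp e
      (zero_add 0) = 0 := by
  obtain ⟨f, rfl⟩ := (Abelian.Ext.mk₀_bijective L N).2 e
  rw [Abelian.Ext.mk₀_comp_mk₀, Abelian.Ext.mk₀_eq_zero_iff]
  have smul_top_le_ker : (J • ⊤ : Submodule A L) ≤ f.hom.ker :=
    Submodule.smul_le.2 fun r hr m _ => by
      rw [LinearMap.mem_ker, map_smul, Module.mem_annihilator.1 (hN hr)]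
  ext m
  exact smul_top_le_ker m.2

theorem mk₀_comp_eq_zero_of_mem {L X : ModuleCat.{u} A} {V : Submodule A L} {i : ℕ}
    {e : Abelian.Ext L N i}
    (he : (Abelian.Ext.mk₀ (ModuleCat.ofHom V.subtype)).comp e (zero_add i) = 0)
    {g : X ⟶ L} (hg : ∀ m, g m ∈ V) : (Abelian.Ext.mk₀ g).comp e (zero_add i) = 0 := by
  rw [show g = ModuleCat.ofHom (g.hom.codRestrict V hg) ≫ ModuleCat.ofHom V.subtype from rfl,
    ← Abelian.Ext.mk₀_comp_mk₀_assoc, he, Abelian.Ext.comp_zero]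

theorem mk₀_τ₃_comp_extClass_comp_eq_zero {S S' : ShortComplex (ModuleCat.{u} A)}
    (hS : S.ShortExact) (hS' : S'.ShortExact) (φ : S ⟶ S') {i n : ℕ} (hn : 1 + i = n)
    {e : Abelian.Ext S'.X₁ N i} (he : (Abelian.Ext.mk₀ φ.τ₁).comp e (zero_add i) = 0) :
    (Abelian.Ext.mk₀ φ.τ₃).comp (hS'.extClass.comp e hn) (zero_add n) = 0 := by
  rw [← Abelian.Ext.comp_assoc _ _ _ (zero_add 1) hn (by lia), ← hS.extClass_naturality hS' φ,
    Abelian.Ext.comp_assoc _ _ _ (add_zero 1) (zero_add i) (by lia), he, Abelian.Ext.comp_zero]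

variable [IsNoetherianRing A]

theorem exists_pow_smul_top_inf_le_pow_smul {F : Type u} [AddCommGroup F] [Module A F]
    [Module.Finite A F] (I : Ideal A) (K : Submodule A F) :
    ∃ c, ∀ s, (I ^ (c + s) • ⊤ ⊓ K : Submodule A F) ≤ I ^ s • K := by
  obtain ⟨c, hc⟩ := I.exists_pow_inf_eq_pow_smul K
  refine ⟨c, fun s => ?_⟩
  rw [hc _ le_self_add, Nat.add_sub_cancel_left]
  exact Submodule.smul_mono le_rfl inf_le_right

/-- Dimension shifting along a free cover `p : F → L`; by Artin–Rees, `I ^ (c + s) F ∩ ker p` lies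
in `I ^ s ker p`. -/
theorem exists_mk₀_subtype_comp_eq_zero {l : ℕ} (hN : I ^ l ≤ Module.annihilator A N) (i : ℕ)
    (L : ModuleCat.{u} A) [Module.Finite A L] (e : Abelian.Ext L N i) :
    ∃ s, (Abelian.Ext.mk₀ (ModuleCat.ofHom (I ^ s • ⊤ : Submodule A L).subtype)).comp e
      (zero_add i) = 0 := by
  induction i generalizing L with
  | zero => exact ⟨l, mk₀_subtype_comp_eq_zero hN e⟩
  | succ i ih =>
    obtain ⟨n, p, hp⟩ := Module.Finite.exists_fin' A L
    have : Module.Finite A (p.shortComplexKer.X₁) := inferInstanceAs (Module.Finite A p.ker)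
    have hS := LinearMap.shortExact_shortComplexKer hp
    obtain ⟨e, rfl⟩ := Abelian.Ext.contravariant_sequence_exact₃ hS N e
      (Abelian.Ext.eq_zero_of_projective _) (add_comm 1 i)
    obtain ⟨s, hs⟩ := ih _ e
    obtain ⟨c, hc⟩ := exists_pow_smul_top_inf_le_pow_smul I p.ker
    refine ⟨c + s, ?_⟩
    let V : Submodule A (Fin n → A) := I ^ (c + s) • ⊤
    have map_V : V.map p = I ^ (c + s) • ⊤ := by
      rw [Submodule.map_smul'', Submodule.map_top, LinearMap.range_eq_top.2 hp]
    let φ := shortComplexKerSubmoduleMap p V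
    have hV := LinearMap.shortExact_shortComplexKer (p.submoduleMap_surjective V)
    have τ₁_comp_eq_zero : (Abelian.Ext.mk₀ φ.τ₁).comp e (zero_add i) = 0 :=
      mk₀_comp_eq_zero_of_mem hs fun a => (Submodule.mem_smul_top_iff ..).2 <|
        hc s ⟨a.1.2, congrArg Subtype.val a.2⟩
    exact mk₀_comp_eq_zero_of_mem
      (mk₀_τ₃_comp_extClass_comp_eq_zero hV hS φ (add_comm 1 i) τ₁_comp_eq_zero)
      fun m => map_V.ge m.2

theorem LimExt.subsingleton_succ {l : ℕ} (hN : I ^ l ≤ Module.annihilator A N) (i : ℕ) :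
    Subsingleton (LimExt I (i + 1) N) := by
  refine subsingleton_of_forall_eq 0 fun u => ?_
  obtain ⟨t, e, rfl⟩ := u.exists_mk
  have hS (t : ℕ) := shortExact_submoduleShortComplex (I ^ t)
  obtain ⟨e, rfl⟩ := Abelian.Ext.contravariant_sequence_exact₃ (hS t) N e
    (Abelian.Ext.eq_zero_of_projective _) (add_comm 1 i)
  obtain ⟨s, hs⟩ := exists_mk₀_subtype_comp_eq_zero hN i (ModuleCat.of A ↥(I ^ t)) e
  have h : t ≤ s + t := by lia
  let φ : submoduleShortComplex (I ^ (s + t)) ⟶ submoduleShortComplex (I ^ t) :=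
    { τ₁ := ModuleCat.ofHom (Submodule.inclusion (Ideal.pow_le_pow_right h))
      τ₂ := 𝟙 _
      τ₃ := quotientPowMap I h }
  have τ₁_comp_eq_zero : (Abelian.Ext.mk₀ φ.τ₁).comp e (zero_add i) = 0 :=
    mk₀_comp_eq_zero_of_mem hs fun a => (Submodule.mem_smul_top_iff ..).2 <| by
      rw [smul_eq_mul, ← pow_add]
      exact a.2
  refine (mk_eq_zero_iff _).2 ⟨s + t, h, ?_⟩
  exact mk₀_τ₃_comp_extClass_comp_eq_zero (hS (s + t)) (hS t) φ (add_comm 1 i) τ₁_comp_eq_zero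

end ArtinRees

section Annihilation

open Pointwise

variable {A : Type u} [CommRing A] {I : Ideal A} {l : ℕ} {x : A}

theorem pow_le_torsionOf_of_pow_add_le {V : Type*} [AddCommGroup V] [Module A V]
    (hx : x ∈ I ^ (l + 1)) (h : ∀ v : V, x • v = 0 → I ^ l ≤ Ideal.torsionOf A V v) {v : V} {t : ℕ}
    (hv : I ^ (l + t) ≤ Ideal.torsionOf A V v) : I ^ l ≤ Ideal.torsionOf A V v := by
  induction t with
  | zero => exact hv
  | succ t ih =>
    refine ih ?_
    rw [pow_add, Ideal.mul_le]
    intro b hb c hc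
    have x_smul_smul : x • c • v = 0 := by
      have x_mul_mem : x * c ∈ I ^ (l + (t + 1)) := by
        rw [show l + (t + 1) = l + 1 + t by lia, pow_add]
        exact Ideal.mul_mem_mul hx hc
      rw [smul_smul]
      exact hv x_mul_mem
    rw [Ideal.mem_torsionOf_iff, mul_smul]
    exact h (c • v) x_smul_smul hb

theorem pow_le_annihilator_of_forall_smul_eq_zero {V : Type*} [AddCommGroup V] [Module A V]
    (hx : x ∈ I ^ (l + 1)) (h : ∀ v : V, x • v = 0 → I ^ l ≤ Ideal.torsionOf A V v)
    (hV : ∀ v : V, ∃ t, I ^ t ≤ Ideal.torsionOf A V v) : I ^ l ≤ Module.annihilator A V := by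
  refine fun r hr => Module.mem_annihilator.2 fun v => ?_
  obtain ⟨t, ht⟩ := hV v
  exact pow_le_torsionOf_of_pow_add_le hx h ((Ideal.pow_le_pow_right le_add_self).trans ht) hr

variable {M : Type u} [AddCommGroup M] [Module A M]

theorem LimExt.le_torsionOf_of_pow_le_torsionOf {J : Ideal A}
    (hJ : J ≤ Module.annihilator A (LimExt I 0 (ModuleCat.of A M))) {m : M} {t : ℕ}
    (hm : I ^ t ≤ Ideal.torsionOf A M m) : J ≤ Ideal.torsionOf A M m := by
  intro r hr
  let f : ModuleCat.of A (A ⧸ I ^ t) ⟶ ModuleCat.of A M :=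
    ModuleCat.ofHom (Submodule.liftQ _ (LinearMap.toSpanSingleton A M m) hm)
  have mk_smul_f : mk (r • Abelian.Ext.mk₀ f) = (0 : LimExt I 0 (ModuleCat.of A M)) := by
    rw [map_smul, Module.mem_annihilator.1 (hJ hr)]
  obtain ⟨s, h, hs⟩ := (mk_eq_zero_iff _).1 mk_smul_f
  rw [extTransition_apply, ← Abelian.Ext.mk₀_smul, Abelian.Ext.mk₀_comp_mk₀,
    Abelian.Ext.mk₀_eq_zero_iff] at hs
  have smul_one_smul : r • (1 : A) • m = 0 := congr(($hs).hom (Submodule.Quotient.mk 1))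
  rwa [one_smul] at smul_one_smul

variable (M x) in
/-- The injection `M ⧸ (0 :_M x) → M` induced by multiplication by `x`. -/
def smulQuotTorsionBy : M ⧸ Submodule.torsionBy A M x →ₗ[A] M :=
  Submodule.liftQ _ (LinearMap.lsmul A M x) le_rfl

theorem smulQuotTorsionBy_injective : Function.Injective (smulQuotTorsionBy x M) :=
  LinearMap.ker_eq_bot.1 (Submodule.ker_liftQ_eq_bot _ _ _ le_rfl)

theorem range_smulQuotTorsionBy : (smulQuotTorsionBy x M).range = x • ⊤ :=
  (Submodule.range_liftQ _ _ _).trans (LinearMap.range_eq_map _)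

variable (M x) in
/-- The short complex `M ⧸ (0 :_M x) → M → M ⧸ x M`, whose first map is multiplication by `x`. -/
abbrev smulShortComplex : ShortComplex (ModuleCat.{u} A) :=
  quotientShortComplex (smulQuotTorsionBy x M) range_smulQuotTorsionBy

theorem shortExact_smulShortComplex : (smulShortComplex x M).ShortExact :=
  shortExact_quotientShortComplex smulQuotTorsionBy_injective _

namespace LimExt

theorem map_smulQuotTorsionBy_map_mkQ {i : ℕ} (u : LimExt I i (ModuleCat.of A M)) :
    map I i (smulShortComplex x M).f (map I i (submoduleShortComplex (.torsionBy A M x)).g u) =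
      x • u := by
  rw [map_map, ← map_smul_id]
  rfl

theorem pow_le_annihilator_zero (hx : x ∈ I ^ (l + 1))
    (hT : I ^ l ≤ Module.annihilator A (Submodule.torsionBy A M x)) :
    I ^ l ≤ Module.annihilator A (LimExt I 0 (ModuleCat.of A M)) := by
  refine pow_le_annihilator_of_forall_smul_eq_zero hx (fun u hu r hr => ?_) exists_pow_le_torsionOf
  have hS := shortExact_submoduleShortComplex (Submodule.torsionBy A M x)
  have := shortExact_smulShortComplex (M := M) (x := x).mono_f
  have map_g_eq_zero : map I 0 (submoduleShortComplex (.torsionBy A M x)).g u = 0 := by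
    apply map_zero_injective (smulShortComplex x M).f
    rw [map_smulQuotTorsionBy_map_mkQ, hu, _root_.map_zero]
  obtain ⟨v, rfl⟩ := exists_map_f_eq hS map_g_eq_zero
  rw [Ideal.mem_torsionOf_iff, ← _root_.map_smul,
    Module.mem_annihilator.1 (annihilator_le_annihilator (hT hr)), _root_.map_zero]

theorem pow_le_annihilator_succ [IsNoetherianRing A] {i : ℕ} (hx : x ∈ I ^ (l + 1))
    (hT : I ^ l ≤ Module.annihilator A (Submodule.torsionBy A M x))
    (hC : I ^ l ≤ Module.annihilator A (LimExt I i (ModuleCat.of A (QuotSMulTop x M)))) :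
    I ^ l ≤ Module.annihilator A (LimExt I (i + 1) (ModuleCat.of A M)) := by
  refine pow_le_annihilator_of_forall_smul_eq_zero hx (fun u hu r hr => ?_) exists_pow_le_torsionOf
  have hS := shortExact_submoduleShortComplex (Submodule.torsionBy A M x)
  have hS' := shortExact_smulShortComplex (M := M) (x := x)
  obtain ⟨v, hv⟩ := exists_δ_eq hS' ((map_smulQuotTorsionBy_map_mkQ u).trans hu)
  have map_g_smul_eq_zero :
      map I (i + 1) (submoduleShortComplex (.torsionBy A M x)).g (r • u) = 0 := by
    rw [_root_.map_smul, ← hv, ← _root_.map_smul, Module.mem_annihilator.1 (hC hr), _root_.map_zero]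
  obtain ⟨w, hw⟩ := exists_map_f_eq hS map_g_smul_eq_zero
  have := subsingleton_succ hT (N := ModuleCat.of A (Submodule.torsionBy A M x)) i
  rw [Ideal.mem_torsionOf_iff, ← hw, Subsingleton.elim w 0, _root_.map_zero]

theorem le_torsionOf_of_map_δ_eq {S S' : ShortComplex (ModuleCat.{u} A)} (hS : S.ShortExact)
    (hS' : S'.ShortExact) {φ : S ⟶ S'} {i : ℕ} (hφ : map I i φ.τ₂ = 0) {J : Ideal A}
    (hJ : J ≤ Module.annihilator A (LimExt I i S'.X₂)) {c : LimExt I i S.X₃}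
    {u : LimExt I i S'.X₃} (hcu : map I (i + 1) φ.τ₁ (δ hS c) = δ hS' u)
    (hc : J ≤ Ideal.torsionOf A _ (δ hS c)) : J ≤ Ideal.torsionOf A _ u := by
  intro r hr
  have δ_sub_eq_zero : δ hS' (u - map I i φ.τ₃ c) = 0 := by
    rw [map_sub, δ_naturality hS hS', hcu, sub_self]
  obtain ⟨v, hv⟩ := exists_map_g_eq hS' δ_sub_eq_zero
  have smul_sub_eq_zero : r • (u - map I i φ.τ₃ c) = 0 := by
    rw [← hv, ← _root_.map_smul, Module.mem_annihilator.1 (hJ hr), _root_.map_zero]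
  obtain ⟨w, hw⟩ := exists_map_g_eq hS ((_root_.map_smul ..).trans (hc hr) : δ hS (r • c) = 0)
  have smul_map_eq_zero : r • map I i φ.τ₃ c = 0 := by
    rw [← _root_.map_smul, ← hw, map_map, ← φ.comm₂₃, ← map_map, hφ, LinearMap.zero_apply,
      _root_.map_zero]
  rw [Ideal.mem_torsionOf_iff, ← sub_add_cancel u (map I i φ.τ₃ c), smul_add, smul_sub_eq_zero,
    smul_map_eq_zero, add_zero]

theorem eq_zero_of_forall_map_proj_eq_zero {ι : Type} [Finite ι] {i : ℕ}
    {u : LimExt I i (ModuleCat.of A (ι → M))}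
    (hu : ∀ k, map I i (ModuleCat.ofHom (LinearMap.proj k) : _ ⟶ ModuleCat.of A M) u = 0) :
    u = 0 := by
  classical
  have := Fintype.ofFinite ι
  have id_eq_sum : 𝟙 (ModuleCat.of A (ι → M)) =
      ∑ k, ModuleCat.ofHom (LinearMap.proj k) ≫
        ModuleCat.ofHom (LinearMap.single A (fun _ => M) k) := by
    ext f
    simp [ModuleCat.hom_sum]
  rw [← map_id u, id_eq_sum, map_sum, LinearMap.sum_apply]
  exact Finset.sum_eq_zero fun k _ => by rw [← map_map, hu, _root_.map_zero]

end LimExt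

variable {ι : Type} {y z : ι → A}

/-- The map `M ⧸ (0 :_M x) → M ^ ι` induced by multiplication by a family `z` of elements
annihilating `0 :_M x`. -/
def smulFamilyQuotTorsionBy
    (hz : ∀ k, z k ∈ Module.annihilator A (Submodule.torsionBy A M x)) :
    M ⧸ Submodule.torsionBy A M x →ₗ[A] ι → M :=
  Submodule.liftQ _ (LinearMap.pi fun k => LinearMap.lsmul A M (z k)) fun m hm =>
    funext fun k => congr(($(Module.mem_annihilator.1 (hz k) ⟨m, hm⟩) : M))

variable [Fintype ι]

variable (M y) in
/-- The map `M ^ ι → M` with coefficients `y`. -/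
def sumSMulProj : (ι → M) →ₗ[A] M := ∑ k, y k • LinearMap.proj k

theorem sumSMulProj_smulFamilyQuotTorsionBy (hx : ∑ k, y k * z k = x)
    (hz : ∀ k, z k ∈ Module.annihilator A (Submodule.torsionBy A M x))
    (m : M ⧸ Submodule.torsionBy A M x) :
    sumSMulProj M y (smulFamilyQuotTorsionBy hz m) = smulQuotTorsionBy x M m := by
  obtain ⟨m, rfl⟩ := Submodule.mkQ_surjective _ m
  change sumSMulProj M y (fun k => z k • m) = x • m
  simp [sumSMulProj, ← hx, Finset.sum_smul, mul_smul]

theorem smulFamilyQuotTorsionBy_injective (hx : ∑ k, y k * z k = x)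
    (hz : ∀ k, z k ∈ Module.annihilator A (Submodule.torsionBy A M x)) :
    Function.Injective (smulFamilyQuotTorsionBy hz) := by
  intro m m' h
  apply smulQuotTorsionBy_injective
  rw [← sumSMulProj_smulFamilyQuotTorsionBy hx hz, h, sumSMulProj_smulFamilyQuotTorsionBy hx]

/-- Multiplication by `x = ∑ k, y k * z k` on `M ⧸ (0 :_M x)` factors through `M ^ ι`; this is the
induced morphism of short complexes. -/
def smulFamilyShortComplexHom (hx : ∑ k, y k * z k = x)
    (hz : ∀ k, z k ∈ Module.annihilator A (Submodule.torsionBy A M x)) :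
    quotientShortComplex (smulFamilyQuotTorsionBy hz) rfl ⟶ smulShortComplex x M where
  τ₁ := 𝟙 _
  τ₂ := ModuleCat.ofHom (sumSMulProj M y)
  τ₃ := ModuleCat.ofHom <| Submodule.mapQ _ _ (sumSMulProj M y) <| by
    rintro _ ⟨m, rfl⟩
    rw [Submodule.mem_comap, sumSMulProj_smulFamilyQuotTorsionBy hx, ← range_smulQuotTorsionBy]
    exact LinearMap.mem_range_self _ m
  comm₁₂ := by
    ext m
    exact (sumSMulProj_smulFamilyQuotTorsionBy hx hz (Submodule.Quotient.mk m)).symm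
  comm₂₃ := rfl

theorem exists_sum_mul_eq_of_mem_mul {J : Ideal A} (hx : x ∈ J * J) :
    ∃ (n : ℕ) (y z : Fin n → A), (∀ k, y k ∈ J) ∧ (∀ k, z k ∈ J) ∧ ∑ k, y k * z k = x := by
  rw [Submodule.mul_eq_span_mul_set] at hx
  obtain ⟨n, f, g, rfl⟩ := Submodule.mem_span_set'.1 hx
  choose y hy z hz hyz using fun k => (g k).2
  exact ⟨n, f * y, z, fun k => J.mul_mem_left _ (hy k), hz, by
    simp [mul_assoc, hyz]⟩

namespace LimExt

theorem map_sumSMulProj_eq_zero {i : ℕ}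
    (hy : ∀ k, y k ∈ Module.annihilator A (LimExt I i (ModuleCat.of A M))) :
    map I i (ModuleCat.ofHom (sumSMulProj M y)) = 0 := by
  have ofHom_eq_sum : ModuleCat.ofHom (sumSMulProj M y) =
      ∑ k, y k • ModuleCat.ofHom (LinearMap.proj k) := by
    ext f
    simp [sumSMulProj, ModuleCat.hom_sum]
  refine LinearMap.ext fun u => ?_
  rw [ofHom_eq_sum, map_sum, LinearMap.sum_apply]
  refine Finset.sum_eq_zero fun k _ => ?_
  rw [_root_.map_smul, LinearMap.smul_apply, Module.mem_annihilator.1 (hy k)]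

theorem map_smulFamilyQuotTorsionBy_eq_zero {ι : Type} [Finite ι] {z : ι → A} {i : ℕ}
    (hz : ∀ k, z k ∈ Module.annihilator A (Submodule.torsionBy A M x))
    (hz' : ∀ k, z k ∈ Module.annihilator A (LimExt I i (ModuleCat.of A M)))
    (u : LimExt I i (ModuleCat.of A M)) :
    map I i (ModuleCat.ofHom (smulFamilyQuotTorsionBy hz))
      (map I i (submoduleShortComplex (.torsionBy A M x)).g u) = 0 := by
  refine eq_zero_of_forall_map_proj_eq_zero fun k => ?_
  rw [map_map, map_map, ← Module.mem_annihilator.1 (hz' k) u, ← map_smul_id]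
  rfl

theorem pow_le_annihilator_quotSMulTop [IsNoetherianRing A] {i : ℕ} (hx : x ∈ I ^ (2 * l))
    (hT : I ^ l ≤ Module.annihilator A (Submodule.torsionBy A M x))
    (hM : I ^ l ≤ Module.annihilator A (LimExt I i (ModuleCat.of A M)))
    (hM' : I ^ l ≤ Module.annihilator A (LimExt I (i + 1) (ModuleCat.of A M))) :
    I ^ l ≤ Module.annihilator A (LimExt I i (ModuleCat.of A (QuotSMulTop x M))) := by
  rw [two_mul, pow_add] at hx
  obtain ⟨n, y, z, hy, hz, hyz⟩ := exists_sum_mul_eq_of_mem_mul hx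
  have hT' := fun k => hT (hz k)
  have hS := shortExact_submoduleShortComplex (Submodule.torsionBy A M x)
  have hF := shortExact_quotientShortComplex (smulFamilyQuotTorsionBy_injective hyz hT') rfl
  have hC := shortExact_smulShortComplex (M := M) (x := x)
  refine fun r hr => Module.mem_annihilator.2 fun u => ?_
  have := subsingleton_succ hT (N := ModuleCat.of A (Submodule.torsionBy A M x)) (i + 1)
  obtain ⟨v, hv⟩ := exists_map_g_eq hS (Subsingleton.elim (δ hS (δ hC u)) 0)
  obtain ⟨c, hc⟩ : ∃ c, δ hF c = δ hC u := exists_δ_eq hF <| by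
    rw [← hv]
    exact map_smulFamilyQuotTorsionBy_eq_zero hT' (fun k => hM' (hz k)) v
  refine le_torsionOf_of_map_δ_eq hF hC (φ := smulFamilyShortComplexHom hyz hT')
    (map_sumSMulProj_eq_zero fun k => hM (hy k)) hM ((map_id _).trans hc) (fun s hs => ?_) hr
  rw [Ideal.mem_torsionOf_iff, hc, ← hv, ← _root_.map_smul, Module.mem_annihilator.1 (hM' hs),
    _root_.map_zero]

end LimExt

end Annihilation

section Sequences

open Pointwise

variable {M : Type} [AddCommGroup M] [Module R M] {n : ℕ} {x : Fin (n + 1) → R}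

theorem pSpan_zero : pSpan M x 0 = ⊥ := by
  simp [pSpan]

theorem image_setOf_lt_succ {α : Type*} (x : Fin (n + 1) → α) (i : Fin n) :
    x '' {j | j < i.succ} = insert (x 0) (Fin.tail x '' {j | j < i}) := by
  ext r
  simp [Fin.exists_fin_succ, Fin.tail, eq_comm]

theorem mk_mem_pSpan {i : Fin n} {m : M} :
    (Submodule.Quotient.mk m : QuotSMulTop (x 0) M) ∈ pSpan (QuotSMulTop (x 0) M) (Fin.tail x) i ↔
      m ∈ pSpan M x i.succ := by
  rw [pSpan, pSpan, image_setOf_lt_succ, Ideal.span_insert, Submodule.sup_smul,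
    Submodule.ideal_span_singleton_smul, ← Submodule.comap_map_mkQ, Submodule.map_smul'',
    Submodule.map_top, Submodule.range_mkQ]
  rfl

theorem isWeakSeq_succ_iff {J : Ideal R} : IsWeakSeq J M x ↔
    J ≤ Module.annihilator R (Submodule.torsionBy R M (x 0)) ∧
      IsWeakSeq J (QuotSMulTop (x 0) M) (Fin.tail x) := by
  constructor
  · refine fun H => ⟨fun a ha => Module.mem_annihilator.2 fun m => ?_, fun i m hm a ha => ?_⟩
    · have smul_eq_zero_of_smul := H 0 m
      rw [pSpan_zero] at smul_eq_zero_of_smul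
      exact Subtype.ext (smul_eq_zero_of_smul m.2 a ha)
    · obtain ⟨m, rfl⟩ := Submodule.mkQ_surjective _ m
      exact mk_mem_pSpan.2 (H i.succ m (mk_mem_pSpan.1 hm) a ha)
  · rintro ⟨H₀, H⟩ i m hm a ha
    induction i using Fin.cases with
    | zero =>
      rw [pSpan_zero] at hm ⊢
      exact congr(($(Module.mem_annihilator.1 (H₀ ha) ⟨m, hm⟩) : M))
    | succ i => exact mk_mem_pSpan.1 (H i (Submodule.Quotient.mk m) (mk_mem_pSpan.2 hm) a ha)

theorem IsFilterRegSeq.exists_pow_le_torsionOf {I : Ideal R} (H : IsFilterRegSeq I M x) {m : M}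
    (hm : x 0 • m = 0) : ∃ t, I ^ t ≤ Ideal.torsionOf R M m := by
  have exists_pow_smul_eq_zero := H 0 m
  rw [pSpan_zero] at exists_pow_smul_eq_zero
  exact exists_pow_smul_eq_zero hm

theorem IsFilterRegSeq.tail {I : Ideal R} (H : IsFilterRegSeq I M x) :
    IsFilterRegSeq I (QuotSMulTop (x 0) M) (Fin.tail x) := by
  intro i m hm
  obtain ⟨m, rfl⟩ := Submodule.mkQ_surjective _ m
  obtain ⟨t, ht⟩ := H i.succ m (mk_mem_pSpan.1 hm)
  exact ⟨t, fun a ha => mk_mem_pSpan.2 (ht a ha)⟩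

theorem IsWeakSeq.isFilterRegSeq {I : Ideal R} {l n : ℕ} {x : Fin n → R}
    (H : IsWeakSeq (I ^ l) M x) : IsFilterRegSeq I M x :=
  fun i m hm => ⟨l, H i m hm⟩

variable [IsNoetherianRing R] {I : Ideal R} {l : ℕ}

theorem IsWeakSeq.pow_le_annihilator_limExt {n : ℕ} {M : Type} [AddCommGroup M] [Module R M]
    {x : Fin n → R} (hx : ∀ j, x j ∈ I ^ (l + 1)) (H : IsWeakSeq (I ^ l) M x) {i : ℕ}
    (hi : i < n) : I ^ l ≤ Module.annihilator R (LimExt I i (ModuleCat.of R M)) := by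
  induction n generalizing M i with
  | zero => contradiction
  | succ n ih =>
    obtain ⟨hT, H⟩ := isWeakSeq_succ_iff.1 H
    cases i with
    | zero => exact LimExt.pow_le_annihilator_zero (hx 0) hT
    | succ i =>
      exact LimExt.pow_le_annihilator_succ (hx 0) hT
        (ih (fun j => hx j.succ) H (Nat.lt_of_succ_lt_succ hi))

theorem IsFilterRegSeq.isWeakSeq {n : ℕ} {M : Type} [AddCommGroup M] [Module R M]
    {x : Fin n → R} (hx : ∀ j, x j ∈ I ^ (2 * l)) (H : IsFilterRegSeq I M x)
    (hM : ∀ i < n, I ^ l ≤ Module.annihilator R (LimExt I i (ModuleCat.of R M))) :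
    IsWeakSeq (I ^ l) M x := by
  induction n generalizing M with
  | zero => exact fun i => i.elim0
  | succ n ih =>
    have hT : I ^ l ≤ Module.annihilator R (Submodule.torsionBy R M (x 0)) := by
      refine fun r hr => Module.mem_annihilator.2 fun m => Subtype.ext ?_
      obtain ⟨t, ht⟩ := H.exists_pow_le_torsionOf m.2
      exact LimExt.le_torsionOf_of_pow_le_torsionOf (hM 0 n.succ_pos) ht hr
    refine isWeakSeq_succ_iff.2 ⟨hT, ih (fun j => hx j.succ) H.tail fun i hi => ?_⟩
    exact LimExt.pow_le_annihilator_quotSMulTop (hx 0) hT (hM i (by lia)) (hM (i + 1) (by lia))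

end Sequences

theorem pow_le_annihilator_limExt_iff {J I : Ideal R} {i : ℕ} {M : Type} [AddCommGroup M]
    [Module R M] : J ≤ Module.annihilator R (LimExt I i (ModuleCat.of R M)) ↔
      ∀ r ∈ J, ∀ m : locH I i M, r • m = 0 := by
  rw [(LimExt.equivLocalCohomology I i (ModuleCat.of R M)).annihilator_eq]
  simp only [SetLike.le_def, Module.mem_annihilator]

theorem theorem_2_6_general [IsNoetherianRing R] (I : Ideal R)
    (M : Type) [AddCommGroup M] [Module R M]
    (ℓ : ℕ) (hℓ : 0 < ℓ) {n : ℕ} (x : Fin n → R) (hx : ∀ j, x j ∈ I ^ (2 * ℓ)) :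
    IsWeakSeq (I ^ ℓ) M x ↔
      ((∀ i : ℕ, i < n → ∀ r ∈ I ^ ℓ, ∀ m : locH I i M, r • m = 0) ∧
        IsFilterRegSeq I M x) := by
  simp only [← pow_le_annihilator_limExt_iff]
  refine ⟨fun H => ⟨fun i hi => H.pow_le_annihilator_limExt (fun j => ?_) hi, H.isFilterRegSeq⟩,
    fun ⟨hM, H⟩ => H.isWeakSeq hx hM⟩
  exact Ideal.pow_le_pow_right (by lia) (hx j)

/-- **Theorem 2.6.** Let `ℓ ≥ 1` and `x₁, …, xₙ ∈ I^(2ℓ)`. Then `x₁, …, xₙ` is an `I^ℓ`-weak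
sequence on `M` if and only if `I^ℓ • H^i_I(M) = 0` for all `0 ≤ i < n` and `x₁, …, xₙ` is an
`I`-filter regular sequence on `M`. -/
theorem theorem_2_6 [IsNoetherianRing R] (I : Ideal R)
    (M : Type) [AddCommGroup M] [Module R M] [Module.Finite R M]
    (ℓ : ℕ) (hℓ : 0 < ℓ) {n : ℕ} (x : Fin n → R) (hx : ∀ j, x j ∈ I ^ (2 * ℓ)) :
    IsWeakSeq (I ^ ℓ) M x ↔
      ((∀ i : ℕ, i < n → ∀ r ∈ I ^ ℓ, ∀ m : locH I i M, r • m = 0) ∧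
        IsFilterRegSeq I M x) :=
  theorem_2_6_general I M ℓ hℓ x hx
end
end
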